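/- arXiv:1706.06184 — 2 statements merged into one kernel-verified Lean document; each statement's English description precedes it below -/
import Mathlib

section
/- Let α ∈ (0,1). There is a constant c > 0 depending only on α such that for every n ≥ 2, every r > 0, every Borel subset A of ℝ₊^n, and every C > 0 with μ_α^n(A) > 1/C, one has μ_α^n( x ∉ A + C (log n)^{1/α − 1}( √r B_{ℓ^2} + r B_{ℓ^1} ) + r^{1/α} B_{ℓ^α} ) ≤ e^{−c r} / ( μ_α^n(A) − 1/C ). -/
open MeasureTheory Filter Topology Pointwise

noncomputable section

/-- The (unnormalized) measure on `ℝ` with density `exp (-x^α) 1_{x ≥ 0}`. -/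
def muKernel (α : ℝ) : Measure ℝ :=
  volume.withDensity fun x => if 0 ≤ x then ENNReal.ofReal (Real.exp (-x ^ α)) else 0

/-- The probability measure `μ_α` on `ℝ`. -/
def muAlpha (α : ℝ) : Measure ℝ := (muKernel α Set.univ)⁻¹ • muKernel α

/-- The `n`-fold product measure `μ_α^n` on `ℝ^n`. -/
def muPi (α : ℝ) (n : ℕ) : Measure (Fin n → ℝ) := Measure.pi fun _ => muAlpha α

/-- `‖h‖_{ℓ^p} = (∑ |h i|^p)^(1/p)`. -/
def lpNorm (p : ℝ) {n : ℕ} (h : Fin n → ℝ) : ℝ := (∑ i, |h i| ^ p) ^ (1 / p)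

/-- The unit ball of `ℓ^p` in `ℝ^n`. -/
def lpBall (p : ℝ) (n : ℕ) : Set (Fin n → ℝ) := {h | lpNorm p h ≤ 1}

/-!
Say that `μ` has property `(τ)` for the cost `c` if `(∫ f ∂μ) * ∫ g ∂μ ≤ 1` whenever
`f x * g y ≤ exp (c x y)`. The property passes to products with the costs added up, and it implies
that the points at cost at least `ρ` from `A` have measure at most `exp (-ρ) / μ A`.

In dimension one, transport the probability density proportional to `f` to the one proportional to
`g`. This proves the property for any law on the half-line and the cost `φ (S x - S y)`, where `S`
is the cumulative hazard and `φ` is quadratic near `0` and linear at infinity. For `μ_α`, `S`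
increases at least as fast as `V x = (b + x) ^ α / 2`, so that `φ (V x - V y)` is a cost as well.

Discarding a set of measure `1 / C`, assume that all coordinates of the points of `A` satisfy
`V ≤ log (n C)`, up to a constant. There, with `h = V x - V y`, inverting `V` gives
`|x - y| ≲ (log (n C)) ^ (1 / α - 1) |h| + |h| ^ (1 / α)`, and the first factor is at most a
multiple of `C (log n) ^ (1 / α - 1)`. Coordinates with `|h| ≤ 1`, whose cost is of order `h ^ 2`,
contribute to the `ℓ²` ball; the others, whose cost is of order `|h|`, contribute to the `ℓ¹` ball
through the first term and to the `ℓ^α` ball through the second.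
-/

/-! ### Real inequalities -/

theorem abs_sub_le_abs_sub_of_monotone {β : Type*} [LinearOrder β] {f g : β → ℝ}
    (hf : Monotone f) (hgf : Monotone fun x => g x - f x) (x y : β) :
    |f x - f y| ≤ |g x - g y| := by
  wlog hxy : y ≤ x generalizing x y
  · rw [abs_sub_comm, abs_sub_comm (g x)]
    exact this y x (le_of_not_ge hxy)
  rw [abs_of_nonneg (sub_nonneg.2 (hf hxy))]
  exact (by linarith [hgf hxy] : f x - f y ≤ g x - g y).trans (le_abs_self _)

theorem exists_add_eq_of_abs_le_add {d p q : ℝ} (hp : 0 ≤ p) (hq : 0 ≤ q) (h : |d| ≤ p + q) :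
    ∃ d₁ d₂, d = d₁ + d₂ ∧ |d₁| ≤ p ∧ |d₂| ≤ q := by
  have hd : d ∈ Metric.closedBall (0 : ℝ) p + Metric.closedBall 0 q := by
    rw [closedBall_add_closedBall hp hq]
    simpa using h
  obtain ⟨d₁, hd₁, d₂, hd₂, rfl⟩ := Set.mem_add.1 hd
  exact ⟨d₁, d₂, rfl, by simpa using hd₁, by simpa using hd₂⟩

/-- The weighted AM-GM inequality with weights `1 / 2 - d` and `1 / 2 + d`. -/
theorem le_weighted_add_of_sq_le {d v w k : ℝ} (hd : |d| ≤ 1 / 2) (hv : 0 ≤ v) (hw : 0 ≤ w)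
    (hk : k ^ 2 ≤ (1 - 4 * d ^ 2) * (v * w)) : k ≤ (1 / 2 - d) * v + (1 / 2 + d) * w := by
  obtain ⟨hd₁, hd₂⟩ := abs_le.1 hd
  have hpos : 0 ≤ (1 / 2 - d) * v + (1 / 2 + d) * w :=
    add_nonneg (mul_nonneg (by linarith) hv) (mul_nonneg (by linarith) hw)
  exact (abs_le_of_sq_le_sq' (by nlinarith [sq_nonneg ((1 / 2 - d) * v - (1 / 2 + d) * w)]) hpos).2

theorem rpow_sub_rpow_le {β s t : ℝ} (hβ : 1 ≤ β) (hs : 0 ≤ s) (hst : s ≤ t) :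
    t ^ β - s ^ β ≤ β * t ^ (β - 1) * (t - s) := by
  obtain rfl | hlt := hst.eq_or_lt
  · simp
  have hslope := (convexOn_rpow hβ).slope_le_of_hasDerivAt hs (hs.trans hst) hlt
    (Real.hasDerivAt_rpow_const (.inr hβ))
  rwa [slope_def_field, div_le_iff₀ (sub_pos.2 hlt)] at hslope

theorem add_rpow_le_two_rpow_mul_rpow_add_rpow {a b γ : ℝ} (ha : 0 ≤ a) (hb : 0 ≤ b) (hγ : 0 ≤ γ) :
    (a + b) ^ γ ≤ 2 ^ γ * (a ^ γ + b ^ γ) := by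
  wlog hab : a ≤ b generalizing a b
  · rw [add_comm a, add_comm (a ^ γ)]
    exact this hb ha (le_of_not_ge hab)
  calc (a + b) ^ γ ≤ (2 * b) ^ γ := Real.rpow_le_rpow (by positivity) (by linarith) hγ
    _ = 2 ^ γ * b ^ γ := Real.mul_rpow two_pos.le hb
    _ ≤ 2 ^ γ * (a ^ γ + b ^ γ) := by
      gcongr
      exact le_add_of_nonneg_left (by positivity)

theorem abs_rpow_sub_rpow_le {β s t : ℝ} (hβ : 1 ≤ β) (hs : 0 ≤ s) (ht : 0 ≤ t) :
    |t ^ β - s ^ β| ≤ β * 2 ^ (β - 1) * (s ^ (β - 1) * |t - s| + |t - s| ^ β) := by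
  have hγ : 0 ≤ β - 1 := sub_nonneg.2 hβ
  have hβ0 : 0 ≤ β := zero_le_one.trans hβ
  have hslope : |t ^ β - s ^ β| ≤ β * (s + |t - s|) ^ (β - 1) * |t - s| := by
    rcases le_total s t with hst | hts
    · rw [abs_of_nonneg (sub_nonneg.2 hst), add_sub_cancel,
        abs_of_nonneg (sub_nonneg.2 (Real.rpow_le_rpow hs hst hβ0))]
      exact rpow_sub_rpow_le hβ hs hst
    · rw [abs_sub_comm, abs_sub_comm t s, abs_of_nonneg (sub_nonneg.2 hts),
        abs_of_nonneg (sub_nonneg.2 (Real.rpow_le_rpow ht hts hβ0))]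
      refine (rpow_sub_rpow_le hβ ht hts).trans ?_
      gcongr
      exact le_add_of_nonneg_right (sub_nonneg.2 hts)
  have hpow : |t - s| ^ (β - 1) * |t - s| = |t - s| ^ β := by
    rw [← Real.rpow_add_one' (abs_nonneg _) (by linarith), sub_add_cancel]
  calc |t ^ β - s ^ β| ≤ β * (s + |t - s|) ^ (β - 1) * |t - s| := hslope
    _ ≤ β * (2 ^ (β - 1) * (s ^ (β - 1) + |t - s| ^ (β - 1))) * |t - s| := by
      gcongr
      exact add_rpow_le_two_rpow_mul_rpow_add_rpow hs (abs_nonneg _) hγ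
    _ = β * 2 ^ (β - 1) * (s ^ (β - 1) * |t - s| + |t - s| ^ (β - 1) * |t - s|) := by ring
    _ = _ := by rw [hpow]

theorem one_add_log_rpow_le {C γ : ℝ} (hC : 1 ≤ C) (hγ : 0 ≤ γ) :
    (1 + Real.log C) ^ γ ≤ (1 + γ) ^ γ * C := by
  obtain rfl | hγ := hγ.eq_or_lt
  · simpa using hC
  have hC0 : 0 ≤ C := zero_le_one.trans hC
  have hlog : 1 + Real.log C ≤ (1 + γ) * C ^ (1 / γ) := by
    have hle := Real.log_le_rpow_div hC0 (one_div_pos.2 hγ)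
    rw [div_div_eq_mul_div, div_one] at hle
    linarith [Real.one_le_rpow hC (one_div_pos.2 hγ).le]
  have := Real.log_nonneg hC
  calc (1 + Real.log C) ^ γ ≤ ((1 + γ) * C ^ (1 / γ)) ^ γ := by gcongr
    _ = (1 + γ) ^ γ * C := by
      rw [Real.mul_rpow (by positivity) (by positivity), one_div, Real.rpow_inv_rpow hC0 hγ.ne']

theorem add_log_mul_rpow_le {B C γ : ℝ} (hB : 0 ≤ B) (hγ : 0 ≤ γ) (hC : 1 ≤ C) {n : ℕ}
    (hn : 2 ≤ n) :
    (B + 2 * Real.log (n * C)) ^ γ ≤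
      ((2 * B + 4) * (1 + γ)) ^ γ * (C * Real.log n ^ γ) := by
  have hn2 : (2 : ℝ) ≤ n := by exact_mod_cast hn
  have hlogC : 0 ≤ Real.log C := Real.log_nonneg hC
  have hlogn : 1 / 2 ≤ Real.log n := by
    linarith [Real.log_two_gt_d9, Real.log_le_log two_pos hn2]
  have hbase : B + 2 * Real.log (n * C) ≤ (2 * B + 4) * Real.log n * (1 + Real.log C) := by
    rw [Real.log_mul (by positivity) (by positivity)]
    nlinarith [mul_nonneg hB hlogC, mul_nonneg hB (sub_nonneg.2 hlogn),
      mul_nonneg (mul_nonneg hB hlogC) (sub_nonneg.2 hlogn),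
      mul_nonneg hlogC (sub_nonneg.2 hlogn)]
  have hlognC : 0 ≤ Real.log (n * C) := Real.log_nonneg (by nlinarith)
  calc (B + 2 * Real.log (n * C)) ^ γ
      ≤ ((2 * B + 4) * Real.log n * (1 + Real.log C)) ^ γ := by gcongr
    _ = (2 * B + 4) ^ γ * Real.log n ^ γ * (1 + Real.log C) ^ γ := by
      rw [Real.mul_rpow (by positivity) (by positivity),
        Real.mul_rpow (by positivity) (by positivity)]
    _ ≤ (2 * B + 4) ^ γ * Real.log n ^ γ * ((1 + γ) ^ γ * C) := by
      gcongr
      exact one_add_log_rpow_le hC hγ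
    _ = ((2 * B + 4) * (1 + γ)) ^ γ * (C * Real.log n ^ γ) := by
      rw [Real.mul_rpow (by positivity) (by positivity)]
      ring

/-! ### Calculus and Lipschitz functions -/

theorem integral_Ioi_pos {q : ℝ → ℝ} {a : ℝ} (hq0 : ∀ x, 0 < q x)
    (hqi : IntegrableOn q (Set.Ioi a)) : 0 < ∫ x in Set.Ioi a, q x := by
  rw [setIntegral_pos_iff_support_of_nonneg_ae (ae_of_all _ fun x => (hq0 x).le) hqi,
    Set.eq_univ_of_forall (s := Function.support q) fun x => (hq0 x).ne']
  simp

theorem integral_Ioi_le_of_le_neg_deriv {g g' h : ℝ → ℝ} {a : ℝ} (hg0 : ∀ x, a ≤ x → 0 ≤ g x)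
    (hgc : ContinuousOn g (Set.Ici a)) (hg : ∀ x ∈ Set.Ioi a, HasDerivAt g (-g' x) x)
    (hh : IntegrableOn h (Set.Ioi a)) (hhg : ∀ x ∈ Set.Ioi a, h x ≤ g' x) :
    ∫ x in Set.Ioi a, h x ≤ g a := by
  refine le_of_tendsto (intervalIntegral_tendsto_integral_Ioi a hh tendsto_id)
    ((eventually_ge_atTop a).mono fun b hb => ?_)
  have hle := intervalIntegral.integral_le_sub_of_hasDeriv_right_of_le (g := -g) (g' := g') hb
    (hgc.neg.mono Set.Icc_subset_Ici_self)
    (fun x hx => (neg_neg (g' x) ▸ (hg x hx.1).neg).hasDerivWithinAt)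
    ((integrableOn_Icc_iff_integrableOn_Ioc).2 (hh.mono_set Set.Ioc_subset_Ioi_self))
    fun x hx => hhg x hx.1
  simp only [Pi.neg_apply, sub_neg_eq_add] at hle
  linarith! [hg0 b hb]

theorem hasDerivAt_const_add_rpow {b x : ℝ} (hbx : b + x ≠ 0) (p : ℝ) :
    HasDerivAt (fun x => (b + x) ^ p) (p * (b + x) ^ (p - 1)) x := by
  simpa using ((hasDerivAt_id x).const_add b).rpow_const (p := p) (.inl hbx)

theorem lipschitzWith_sum {ι Y : Type*} [PseudoEMetricSpace Y] {f : ι → Y → ℝ} {K : ι → NNReal}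
    {s : Finset ι} (hf : ∀ i ∈ s, LipschitzWith (K i) (f i)) :
    LipschitzWith (∑ i ∈ s, K i) fun y => ∑ i ∈ s, f i y := by
  induction s using Finset.cons_induction with
  | empty => simp
  | cons a s ha ih =>
    simp only [Finset.sum_cons]
    exact (hf a (s.mem_cons_self a)).add (ih fun i hi => hf i (Finset.mem_cons_of_mem hi))

/-! ### Property `(τ)` and concentration -/

section PropertyTau

variable {X Y : Type*} [TopologicalSpace X] [TopologicalSpace Y]

/-- The test functions in property `(τ)`. -/
structure IsTauTest (f : X → ℝ) : Prop where
  continuous : Continuous f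
  pos : ∀ x, 0 < f x
  bddAbove : BddAbove (Set.range f)

namespace IsTauTest

variable {f : X → ℝ}

theorem of_le (hf : Continuous f) (hf0 : ∀ x, 0 < f x) {M : ℝ} (hM : ∀ x, f x ≤ M) :
    IsTauTest f :=
  ⟨hf, hf0, M, by rintro _ ⟨x, rfl⟩; exact hM x⟩

theorem comp (hf : IsTauTest f) {e : Y → X} (he : Continuous e) : IsTauTest (f ∘ e) :=
  ⟨hf.continuous.comp he, fun y => hf.pos (e y), hf.bddAbove.mono (Set.range_comp_subset_range e f)⟩

theorem mul_const (hf : IsTauTest f) {a : ℝ} (ha : 0 < a) : IsTauTest fun x => f x * a := by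
  obtain ⟨M, hM⟩ := hf.bddAbove
  exact .of_le (hf.continuous.mul_const a) (fun x => mul_pos (hf.pos x) ha)
    fun x => mul_le_mul_of_nonneg_right (hM ⟨x, rfl⟩) ha.le

theorem exists_norm_le (hf : IsTauTest f) : ∃ M, ∀ x, ‖f x‖ ≤ M := by
  obtain ⟨M, hM⟩ := hf.bddAbove
  exact ⟨M, fun x => by simpa [abs_of_pos (hf.pos x)] using hM ⟨x, rfl⟩⟩

theorem integrable [MeasurableSpace X] [OpensMeasurableSpace X] (hf : IsTauTest f)
    (μ : Measure X) [IsFiniteMeasure μ] : Integrable f μ := by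
  obtain ⟨M, hM⟩ := hf.exists_norm_le
  exact .of_bound hf.continuous.measurable.aestronglyMeasurable M (ae_of_all _ hM)

theorem integral_pos [MeasurableSpace X] [OpensMeasurableSpace X] (hf : IsTauTest f)
    (μ : Measure X) [IsFiniteMeasure μ] [NeZero μ] : 0 < ∫ x, f x ∂μ := by
  rw [integral_pos_iff_support_of_nonneg (fun x => (hf.pos x).le) (hf.integrable μ),
    Set.eq_univ_of_forall (s := Function.support f) fun x => (hf.pos x).ne']
  exact NeZero.pos _

theorem marginal {f : X × Y → ℝ} (hf : IsTauTest f) [FirstCountableTopology X]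
    [MeasurableSpace Y] [OpensMeasurableSpace Y] (ν : Measure Y) [IsFiniteMeasure ν] [NeZero ν] :
    IsTauTest fun x => ∫ y, f (x, y) ∂ν := by
  have hslice (x : X) : IsTauTest fun y => f (x, y) := hf.comp (Continuous.prodMk_right x)
  obtain ⟨M, hM⟩ := hf.exists_norm_le
  refine .of_le (M := M * ν.real Set.univ) ?_ (fun x => (hslice x).integral_pos ν) fun x => ?_
  · exact continuous_of_dominated
      (fun x => (hslice x).continuous.measurable.aestronglyMeasurable)
      (fun x => ae_of_all _ fun y => hM (x, y)) (integrable_const M)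
      (ae_of_all _ fun y => hf.continuous.comp (Continuous.prodMk_left y))
  · exact (le_abs_self _).trans (norm_integral_le_of_norm_le_const (ae_of_all _ fun y => hM (x, y)))

end IsTauTest

variable [MeasurableSpace X] [MeasurableSpace Y]

/-- Property `(τ)` of Maurey for the measure `μ` and the cost `c`. Taking for `f` the largest
function allowed by `g` recovers the usual form with the infimum convolution of `g` and `c`. -/
def HasPropertyTau (μ : Measure X) (c : X → X → ℝ) : Prop :=
  ∀ ⦃f g : X → ℝ⦄, IsTauTest f → IsTauTest g → (∀ x y, f x * g y ≤ Real.exp (c x y)) →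
    (∫ x, f x ∂μ) * ∫ x, g x ∂μ ≤ 1

namespace HasPropertyTau

variable {μ : Measure X} {ν : Measure Y} {c : X → X → ℝ} {d : Y → Y → ℝ}

theorem mono (hμ : HasPropertyTau μ c) {c' : X → X → ℝ} (hc : ∀ x y, c' x y ≤ c x y) :
    HasPropertyTau μ c' := fun _ _ hf hg hfg =>
  hμ hf hg fun x y => (hfg x y).trans (Real.exp_le_exp.2 (hc x y))

theorem dirac [OpensMeasurableSpace X] {a : X} (hc : c a a ≤ 0) :
    HasPropertyTau (Measure.dirac a) c := fun f g hf hg hfg => by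
  rw [integral_dirac' f a hf.continuous.measurable.stronglyMeasurable,
    integral_dirac' g a hg.continuous.measurable.stronglyMeasurable]
  exact (hfg a a).trans (Real.exp_le_one_iff.2 hc)

theorem of_measurePreserving [OpensMeasurableSpace Y] {e : X → Y} (he : MeasurePreserving e μ ν)
    (hec : Continuous e) (hμ : HasPropertyTau μ fun x y => d (e x) (e y)) :
    HasPropertyTau ν d := by
  intro f g hf hg hfg
  rw [← he.map_eq, integral_map he.aemeasurable hf.continuous.measurable.aestronglyMeasurable,
    integral_map he.aemeasurable hg.continuous.measurable.aestronglyMeasurable]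
  exact hμ (hf.comp hec) (hg.comp hec) fun x y => hfg (e x) (e y)

theorem prod [OpensMeasurableSpace X] [OpensMeasurableSpace Y] [SecondCountableTopology X]
    [IsFiniteMeasure μ] [IsFiniteMeasure ν] [NeZero ν]
    (hμ : HasPropertyTau μ c) (hν : HasPropertyTau ν d) :
    HasPropertyTau (μ.prod ν) fun p q => c p.1 q.1 + d p.2 q.2 := by
  intro f g hf hg hfg
  rw [integral_prod _ (hf.integrable _), integral_prod _ (hg.integrable _)]
  refine hμ (hf.marginal ν) (hg.marginal ν) fun x x' => ?_
  have hexp : 0 < Real.exp (-c x x') := Real.exp_pos _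
  have hslice := hν (hf.comp (Continuous.prodMk_right x))
    ((hg.comp (Continuous.prodMk_right x')).mul_const hexp) fun y y' => by
      rw [← mul_assoc]
      calc f (x, y) * g (x', y') * Real.exp (-c x x')
          ≤ Real.exp (c x x' + d y y') * Real.exp (-c x x') :=
            mul_le_mul_of_nonneg_right (hfg (x, y) (x', y')) hexp.le
        _ = Real.exp (d y y') := by rw [← Real.exp_add]; ring_nf
  rwa [integral_mul_const, ← mul_assoc, Real.exp_neg, ← div_eq_mul_inv,
    div_le_one (Real.exp_pos _)] at hslice

theorem pi_fin {n : ℕ} {X : Fin n → Type*} [∀ i, TopologicalSpace (X i)]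
    [∀ i, MeasurableSpace (X i)] [∀ i, OpensMeasurableSpace (X i)]
    [∀ i, SecondCountableTopology (X i)] {μ : ∀ i, Measure (X i)}
    [∀ i, IsProbabilityMeasure (μ i)] {c : ∀ i, X i → X i → ℝ}
    (hμ : ∀ i, HasPropertyTau (μ i) (c i)) :
    HasPropertyTau (Measure.pi μ) fun x y => ∑ i, c i (x i) (y i) := by
  induction n with
  | zero =>
    rw [Measure.pi_of_empty μ]
    exact .dirac (by simp)
  | succ n ih =>
    have hcons : Continuous (MeasurableEquiv.piFinSuccAbove X 0).symm :=
      continuous_fst.finInsertNth 0 continuous_snd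
    refine of_measurePreserving (measurePreserving_piFinSuccAbove μ 0).symm hcons ?_
    simp only [Fin.sum_univ_succ]
    exact (hμ 0).prod (ih fun i => hμ i.succ)

theorem pi {ι : Type*} [Fintype ι] {X : ι → Type*} [∀ i, TopologicalSpace (X i)]
    [∀ i, MeasurableSpace (X i)] [∀ i, OpensMeasurableSpace (X i)]
    [∀ i, SecondCountableTopology (X i)] {μ : ∀ i, Measure (X i)}
    [∀ i, IsProbabilityMeasure (μ i)] {c : ∀ i, X i → X i → ℝ}
    (hμ : ∀ i, HasPropertyTau (μ i) (c i)) :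
    HasPropertyTau (Measure.pi μ) fun x y => ∑ i, c i (x i) (y i) := by
  let e := (Fintype.equivFin ι).symm
  refine of_measurePreserving (measurePreserving_piCongrLeft μ e)
    (Homeomorph.piCongrLeft e).continuous ?_
  simp only [← e.sum_comp, MeasurableEquiv.piCongrLeft_apply_apply]
  exact pi_fin fun i => hμ (e i)

end HasPropertyTau

end PropertyTau

section Concentration

variable {X Y : Type*} [PseudoMetricSpace Y] {c : Y → Y → ℝ} {L : NNReal} {A : Set X} {V : X → Y}

theorem lipschitzWith_iInf_cost [Nonempty A] (hc : ∀ x y, 0 ≤ c x y)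
    (hc₁ : ∀ y, LipschitzWith L fun x => c x y) :
    LipschitzWith L fun x => ⨅ k : A, c x (V k) := by
  refine .of_le_add_mul L fun x y => ?_
  rw [← sub_le_iff_le_add]
  refine le_ciInf fun k => ?_
  rw [sub_le_iff_le_add]
  exact (ciInf_le ⟨0, by rintro _ ⟨k, rfl⟩; exact hc x (V k)⟩ k).trans
    ((hc₁ (V k)).le_add_mul x y)

theorem iInf_cost_le_add_infDist (hA : A.Nonempty) (hc : ∀ x y, 0 ≤ c x y)
    (hc₂ : ∀ x, LipschitzWith L (c x)) (x y : Y) :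
    ⨅ k : A, c x (V k) ≤ c x y + L * Metric.infDist y (V '' A) := by
  have := (hA.image V).to_subtype
  rw [Metric.infDist_eq_iInf, Real.mul_iInf_of_nonneg L.coe_nonneg,
    add_ciInf ⟨0, by rintro _ ⟨w, rfl⟩; positivity⟩]
  refine le_ciInf fun ⟨_, k, hk, rfl⟩ => ?_
  rw [dist_comm]
  exact (ciInf_le ⟨0, by rintro _ ⟨k, rfl⟩; exact hc x (V k)⟩ ⟨k, hk⟩).trans
    ((hc₂ x).le_add_mul (V k) y)

/-- Apply property `(τ)` to `exp (min ρ F)`, where `F x` is the cost of moving `x` to `A`, and to a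
function equal to `1` on `A` and decaying fast enough away from `A`. -/
theorem HasPropertyTau.measureReal_mul_measureReal_le [TopologicalSpace X] [MeasurableSpace X]
    [OpensMeasurableSpace X] {ν : Measure X} [IsFiniteMeasure ν] (hV : Continuous V)
    (hν : HasPropertyTau ν fun x y => c (V x) (V y)) (hc : ∀ x y, 0 ≤ c x y)
    (hc₁ : ∀ y, LipschitzWith L fun x => c x y) (hc₂ : ∀ x, LipschitzWith L (c x))
    (A : Set X) (ρ : ℝ) :
    ν.real {x | ∀ k ∈ A, ρ ≤ c (V x) (V k)} * ν.real A ≤ Real.exp (-ρ) := by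
  rcases A.eq_empty_or_nonempty with rfl | hA
  · simpa using (Real.exp_pos _).le
  have := hA.to_subtype
  let F : Y → ℝ := fun x => ⨅ k : A, c x (V k)
  let D : Y → ℝ := fun y => L * Metric.infDist y (V '' A)
  have hF : Continuous F := (lipschitzWith_iInf_cost hc hc₁).continuous
  have hD : Continuous D := continuous_const.mul (Metric.continuous_infDist_pt _)
  have hf : IsTauTest fun x => Real.exp (min ρ (F (V x))) :=
    .of_le (Real.continuous_exp.comp (continuous_const.min (hF.comp hV))) (fun _ => Real.exp_pos _)
      fun x => Real.exp_le_exp.2 (min_le_left ρ (F (V x)))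
  have hg : IsTauTest fun y => Real.exp (-D (V y)) :=
    .of_le (Real.continuous_exp.comp (hD.comp hV).neg) (fun _ => Real.exp_pos _) fun y =>
      Real.exp_le_one_iff.2 (neg_nonpos.2 (mul_nonneg L.coe_nonneg Metric.infDist_nonneg))
  have hfg : (∫ x, Real.exp (min ρ (F (V x))) ∂ν) * ∫ y, Real.exp (-D (V y)) ∂ν ≤ 1 :=
    hν hf hg fun x y => by
      rw [← Real.exp_add, Real.exp_le_exp, ← sub_eq_add_neg, sub_le_iff_le_add]
      exact (min_le_right _ _).trans (iInf_cost_le_add_infDist hA hc hc₂ _ _)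
  have hE : Real.exp ρ * ν.real {x | ∀ k ∈ A, ρ ≤ c (V x) (V k)} ≤
      ∫ x, Real.exp (min ρ (F (V x))) ∂ν := by
    refine (mul_le_mul_of_nonneg_left (measureReal_mono fun x hx => ?_) (Real.exp_pos ρ).le).trans
      (mul_meas_ge_le_integral_of_nonneg (ae_of_all _ fun x => (hf.pos x).le)
        (hf.integrable ν) (Real.exp ρ))
    exact Real.exp_le_exp.2 (le_min le_rfl (le_ciInf fun k => hx k k.2))
  have hgA : ν.real A ≤ ∫ y, Real.exp (-D (V y)) ∂ν := by
    rw [← one_mul (ν.real A)]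
    refine (mul_le_mul_of_nonneg_left (measureReal_mono fun y hy => ?_) zero_le_one).trans
      (mul_meas_ge_le_integral_of_nonneg (ae_of_all _ fun y => (hg.pos y).le) (hg.integrable ν) 1)
    simp [D, Metric.infDist_zero_of_mem (Set.mem_image_of_mem V hy)]
  rw [Real.exp_neg, ← one_div, le_div_iff₀ (Real.exp_pos ρ)]
  calc ν.real {x | ∀ k ∈ A, ρ ≤ c (V x) (V k)} * ν.real A * Real.exp ρ
      = Real.exp ρ * ν.real {x | ∀ k ∈ A, ρ ≤ c (V x) (V k)} * ν.real A := by ring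
    _ ≤ _ := mul_le_mul hE hgA measureReal_nonneg (integral_nonneg fun x => (hf.pos x).le)
    _ ≤ 1 := hfg

end Concentration

/-! ### Property `(τ)` on the half-line -/

section PosDensity

/-- The everywhere positive continuous functions restricting to a probability density on `(0, ∞)`.
Positivity on the whole line makes the primitive from `0` globally invertible. -/
structure IsPosDensity (p : ℝ → ℝ) : Prop where
  continuous : Continuous p
  pos : ∀ x, 0 < p x
  integral_Ioi : ∫ x in Set.Ioi 0, p x = 1

/-- The cumulative hazard `-log (tail)` of a probability density `p` on `(0, ∞)`. -/
def cumHazard (p : ℝ → ℝ) (x : ℝ) : ℝ := -Real.log (1 - ∫ t in 0..x, p t)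

/-- The measure on `(0, ∞)` with density `p`, seen as a measure on `ℝ`. -/
def densityMeasure (p : ℝ → ℝ) : Measure ℝ :=
  (volume.restrict (Set.Ioi 0)).withDensity fun x => ENNReal.ofReal (p x)

theorem cumHazard_zero (p : ℝ → ℝ) : cumHazard p 0 = 0 := by simp [cumHazard]

namespace IsPosDensity

variable {p a b : ℝ → ℝ}

theorem normalize {q : ℝ → ℝ} (hq : Continuous q) (hq0 : ∀ x, 0 < q x)
    (hqi : IntegrableOn q (Set.Ioi 0)) : IsPosDensity fun x => q x / ∫ t in Set.Ioi 0, q t where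
  continuous := hq.div_const _
  pos x := div_pos (hq0 x) (integral_Ioi_pos hq0 hqi)
  integral_Ioi := by rw [integral_div, div_self (integral_Ioi_pos hq0 hqi).ne']

theorem integrableOn (hp : IsPosDensity p) : IntegrableOn p (Set.Ioi 0) :=
  .of_integral_ne_zero (by rw [hp.integral_Ioi]; exact one_ne_zero)

theorem hasStrictDerivAt_integral (hp : IsPosDensity p) (x : ℝ) :
    HasStrictDerivAt (fun x => ∫ t in 0..x, p t) (p x) x :=
  hp.continuous.integral_hasStrictDerivAt 0 x

theorem strictMono_integral (hp : IsPosDensity p) : StrictMono fun x => ∫ t in 0..x, p t :=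
  strictMono_of_hasDerivAt_pos (fun x => (hp.hasStrictDerivAt_integral x).hasDerivAt) hp.pos

theorem tendsto_integral (hp : IsPosDensity p) :
    Tendsto (fun x => ∫ t in 0..x, p t) atTop (𝓝 1) :=
  hp.integral_Ioi ▸ intervalIntegral_tendsto_integral_Ioi 0 hp.integrableOn tendsto_id

theorem integral_lt_one (hp : IsPosDensity p) (x : ℝ) : ∫ t in 0..x, p t < 1 :=
  (hp.strictMono_integral (lt_add_one x)).trans_le
    (hp.strictMono_integral.monotone.ge_of_tendsto hp.tendsto_integral (x + 1))

theorem exists_integral_eq (hp : IsPosDensity p) {v : ℝ} (hv0 : 0 ≤ v) (hv : v < 1) :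
    ∃ x, 0 ≤ x ∧ ∫ t in 0..x, p t = v := by
  obtain ⟨R, hR, hR0⟩ :=
    ((hp.tendsto_integral.eventually (lt_mem_nhds hv)).and (eventually_ge_atTop 0)).exists
  have hcont : Continuous fun x => ∫ t in 0..x, p t :=
    continuous_iff_continuousAt.2 fun x => (hp.hasStrictDerivAt_integral x).hasDerivAt.continuousAt
  have hmem : v ∈ Set.Icc (∫ t in 0..0, p t) (∫ t in 0..R, p t) := ⟨by simpa using hv0, hR.le⟩
  obtain ⟨x, hx, hxv⟩ := intermediate_value_Icc hR0 hcont.continuousOn hmem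
  exact ⟨x, hx.1, hxv⟩

theorem exp_neg_cumHazard (hp : IsPosDensity p) (x : ℝ) :
    Real.exp (-cumHazard p x) = 1 - ∫ t in 0..x, p t := by
  rw [cumHazard, neg_neg, Real.exp_log (sub_pos.2 (hp.integral_lt_one x))]

theorem integral_Ioi_eq_exp_neg_cumHazard (hp : IsPosDensity p) {x : ℝ} (hx : 0 ≤ x) :
    ∫ t in Set.Ioi x, p t = Real.exp (-cumHazard p x) := by
  rw [hp.exp_neg_cumHazard, ← hp.integral_Ioi, ← intervalIntegral.integral_Ioi_sub_Ioi
    hp.integrableOn hx]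
  ring

theorem hasDerivAt_cumHazard (hp : IsPosDensity p) (x : ℝ) :
    HasDerivAt (cumHazard p) (p x * Real.exp (cumHazard p x)) x := by
  have hlt := sub_pos.2 (hp.integral_lt_one x)
  convert! (((hp.hasStrictDerivAt_integral x).hasDerivAt.const_sub 1).log hlt.ne').neg using 1
  rw [← neg_neg (cumHazard p x), Real.exp_neg, hp.exp_neg_cumHazard, neg_div, neg_neg,
    div_eq_mul_inv]

theorem monotone_cumHazard (hp : IsPosDensity p) :
    Monotone (cumHazard p) :=
  monotone_of_hasDerivAt_nonneg hp.hasDerivAt_cumHazard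
    fun x => (mul_pos (hp.pos x) (Real.exp_pos _)).le

/-- The map is the increasing transport of `a` to `b`. -/
theorem exists_hasDerivAt_transport (ha : IsPosDensity a) (hb : IsPosDensity b) :
    ∃ τ : ℝ → ℝ, τ 0 = 0 ∧ ∀ x, 0 ≤ x → 0 ≤ τ x ∧ HasDerivAt τ (a x / b (τ x)) x := by
  let B : ℝ → ℝ := fun y => ∫ t in 0..y, b t
  have hinv : Function.LeftInverse (Function.invFun B) B :=
    Function.leftInverse_invFun hb.strictMono_integral.injective
  refine ⟨fun x => Function.invFun B (∫ t in 0..x, a t), ?_, fun x hx => ?_⟩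
  · simpa [B] using hinv 0
  obtain ⟨y, hy, hyx⟩ := hb.exists_integral_eq
    (intervalIntegral.integral_nonneg hx fun t _ => (ha.pos t).le) (ha.integral_lt_one x)
  have hτ : Function.invFun B (∫ t in 0..x, a t) = y := by rw [← hyx]; exact hinv y
  have hB : HasDerivAt (Function.invFun B) (b y)⁻¹ (∫ t in 0..x, a t) := by
    rw [← hyx]
    exact ((hb.hasStrictDerivAt_integral y).to_local_left_inverse (hb.pos y).ne'
      (.of_forall hinv)).hasDerivAt
  have hcomp := hB.comp x (ha.hasStrictDerivAt_integral x).hasDerivAt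
  rw [← div_eq_inv_mul] at hcomp
  simp only [hτ]
  exact ⟨hy, hcomp⟩

theorem isProbabilityMeasure (hp : IsPosDensity p) : IsProbabilityMeasure (densityMeasure p) := by
  constructor
  rw [densityMeasure, withDensity_apply _ .univ, setLIntegral_univ,
    ← ofReal_integral_eq_lintegral_ofReal hp.integrableOn (ae_of_all _ fun x => (hp.pos x).le),
    hp.integral_Ioi, ENNReal.ofReal_one]

theorem integral_densityMeasure (hp : IsPosDensity p) (f : ℝ → ℝ) :
    ∫ x, f x ∂densityMeasure p = ∫ x in Set.Ioi 0, f x * p x := by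
  rw [densityMeasure, integral_withDensity_eq_integral_toReal_smul
    hp.continuous.measurable.ennreal_ofReal (ae_of_all _ fun _ => ENNReal.ofReal_lt_top)]
  simp only [ENNReal.toReal_ofReal (hp.pos _).le, smul_eq_mul, mul_comm]

theorem integrable_densityMeasure_iff (hp : IsPosDensity p) {f : ℝ → ℝ} :
    Integrable f (densityMeasure p) ↔ IntegrableOn (fun x => f x * p x) (Set.Ioi 0) := by
  rw [densityMeasure, integrable_withDensity_iff_integrable_smul'
    hp.continuous.measurable.ennreal_ofReal (ae_of_all _ fun _ => ENNReal.ofReal_lt_top)]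
  simp only [ENNReal.toReal_ofReal (hp.pos _).le, smul_eq_mul, mul_comm, IntegrableOn]

theorem measureReal_Ioi (hp : IsPosDensity p) {x : ℝ} (hx : 0 ≤ x) :
    (densityMeasure p).real (Set.Ioi x) = Real.exp (-cumHazard p x) := by
  rw [← hp.integral_Ioi_eq_exp_neg_cumHazard hx, Measure.real, densityMeasure,
    withDensity_apply _ measurableSet_Ioi, Measure.restrict_restrict measurableSet_Ioi,
    Set.inter_eq_left.2 (Set.Ioi_subset_Ioi hx), ← ofReal_integral_eq_lintegral_ofReal
    (hp.integrableOn.mono_set (Set.Ioi_subset_Ioi hx)) (ae_of_all _ fun x => (hp.pos x).le),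
    ENNReal.toReal_ofReal (integral_nonneg fun x => (hp.pos x).le)]

end IsPosDensity

theorem ae_nonneg_densityMeasure (p : ℝ → ℝ) : ∀ᵐ x ∂densityMeasure p, 0 ≤ x :=
  (withDensity_absolutelyContinuous _ _).ae_le <|
    (ae_restrict_mem measurableSet_Ioi).mono fun _ hx => (Set.mem_Ioi.1 hx).le

end PosDensity

section TauCost

/-- The costs `φ` (with derivative `φ'`) of the difference of cumulative hazards for which every
probability density on `(0, ∞)` satisfies property `(τ)`. -/
structure IsTauCost (φ φ' : ℝ → ℝ) : Prop where
  hasDerivAt : ∀ x, HasDerivAt φ (φ' x) x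
  map_zero : φ 0 = 0
  one_le_exp_mul : ∀ x, 1 ≤ Real.exp (φ x) * (1 - 4 * φ' x ^ 2)

namespace IsTauCost

variable {φ φ' : ℝ → ℝ}

theorem abs_deriv_le (hφ : IsTauCost φ φ') (x : ℝ) : |φ' x| ≤ 1 / 2 := by
  have hpos : 0 < 1 - 4 * φ' x ^ 2 :=
    pos_of_mul_pos_right (one_pos.trans_le (hφ.one_le_exp_mul x)) (Real.exp_pos _).le
  exact abs_le_of_sq_le_sq (by linarith) (by norm_num)

theorem lipschitzWith (hφ : IsTauCost φ φ') : LipschitzWith 2⁻¹ φ :=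
  lipschitzWith_of_nnnorm_deriv_le (fun x => (hφ.hasDerivAt x).differentiableAt) fun x => by
    rw [(hφ.hasDerivAt x).deriv, ← NNReal.coe_le_coe]
    simpa using hφ.abs_deriv_le x

/-- In `le_one_of_sq_mul_le`, `s` and `t` are the cumulative hazards at `x` and at its image `y`
under the transport of `a` to `b`, and `a / b` is the derivative of that transport. -/
theorem mul_le_exp_mul_speed (hφ : IsTauCost φ φ') {s t p q a b R : ℝ} (hp : 0 < p) (hq : 0 < q)
    (ha : 0 < a) (hb : 0 < b) (h : R ^ 2 * (a * b) ≤ p * q * Real.exp (φ (s - t))) :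
    R * a ≤ Real.exp (-((s + t) / 2 - φ (s - t))) *
      ((1 / 2 - φ' (s - t)) * (p * Real.exp s) +
        (1 / 2 + φ' (s - t)) * (q * Real.exp t * (a / b))) := by
  set E := Real.exp (-((s + t) / 2 - φ (s - t)))
  set e := Real.exp (φ (s - t))
  have hE : E * E * (Real.exp s * Real.exp t) = e * e := by
    simp only [E, e, ← Real.exp_add]
    ring_nf
  have hk : (R * a) ^ 2 ≤ (1 - 4 * φ' (s - t) ^ 2) *
      (E * (p * Real.exp s) * (E * (q * Real.exp t * (a / b)))) := by
    calc (R * a) ^ 2 = R ^ 2 * (a * b) * (a / b) * 1 := by field_simp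
      _ ≤ p * q * e * (a / b) * (e * (1 - 4 * φ' (s - t) ^ 2)) := by
        gcongr
        exact hφ.one_le_exp_mul (s - t)
      _ = (1 - 4 * φ' (s - t) ^ 2) * (e * e * (p * q * (a / b))) := by ring
      _ = _ := by rw [← hE]; ring
  exact (le_weighted_add_of_sq_le (hφ.abs_deriv_le _) (by positivity) (by positivity) hk).trans_eq
    (by ring)

/-- Let `τ` transport `a` to `b` and let `z` be the mean of the cumulative hazards at `x` and `τ x`
minus their cost. Then `z 0 = 0` and `R * a ≤ -(exp (-z))'`, whence `R ≤ exp (-z 0) = 1`. -/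
theorem le_one_of_sq_mul_le (hφ : IsTauCost φ φ') {p a b : ℝ → ℝ} (hp : IsPosDensity p)
    (ha : IsPosDensity a) (hb : IsPosDensity b) {R : ℝ}
    (h : ∀ x y, 0 ≤ x → 0 ≤ y →
      R ^ 2 * (a x * b y) ≤ p x * p y * Real.exp (φ (cumHazard p x - cumHazard p y))) :
    R ≤ 1 := by
  obtain ⟨τ, hτ0, hτ⟩ := ha.exists_hasDerivAt_transport hb
  let S := cumHazard p
  let z : ℝ → ℝ := fun x => (S x + S (τ x)) / 2 - φ (S x - S (τ x))
  let z' : ℝ → ℝ := fun x =>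
    (1 / 2 - φ' (S x - S (τ x))) * (p x * Real.exp (S x)) +
      (1 / 2 + φ' (S x - S (τ x))) * (p (τ x) * Real.exp (S (τ x)) * (a x / b (τ x)))
  have hz0 : z 0 = 0 := by simp [z, S, hτ0, cumHazard_zero, hφ.map_zero]
  have hz (x : ℝ) (hx : 0 ≤ x) : HasDerivAt z (z' x) x := by
    have hS := hp.hasDerivAt_cumHazard x
    have hSτ := (hp.hasDerivAt_cumHazard (τ x)).comp x (hτ x hx).2
    convert! ((hS.add hSτ).div_const 2).sub ((hφ.hasDerivAt _).comp x (hS.sub hSτ)) using 1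
    simp only [z', S, Pi.sub_apply, Function.comp_apply]
    ring
  have hexp (x : ℝ) (hx : 0 ≤ x) :
      HasDerivAt (fun x => Real.exp (-z x)) (-(Real.exp (-z x) * z' x)) x := by
    simpa using (hz x hx).neg.exp
  calc R = ∫ x in Set.Ioi 0, R * a x := by rw [integral_const_mul, ha.integral_Ioi, mul_one]
    _ ≤ Real.exp (-z 0) := integral_Ioi_le_of_le_neg_deriv
        (g := fun x => Real.exp (-z x)) (fun x _ => (Real.exp_pos _).le)
        (fun x hx => (hexp x hx).continuousAt.continuousWithinAt)
        (fun x hx => hexp x hx.le) (ha.integrableOn.const_mul R) fun x hx =>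
        hφ.mul_le_exp_mul_speed (hp.pos x) (hp.pos _) (ha.pos x) (hb.pos _)
          (h x (τ x) hx.le (hτ x hx.le).1)
    _ = 1 := by simp [hz0]

theorem hasPropertyTau_densityMeasure (hφ : IsTauCost φ φ') {p : ℝ → ℝ} (hp : IsPosDensity p) :
    HasPropertyTau (densityMeasure p) fun x y => φ (cumHazard p x - cumHazard p y) := by
  intro f g hf hg hfg
  have := hp.isProbabilityMeasure
  have hfi := hp.integrable_densityMeasure_iff.1 (hf.integrable _)
  have hgi := hp.integrable_densityMeasure_iff.1 (hg.integrable _)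
  have hfp (x : ℝ) : 0 < f x * p x := mul_pos (hf.pos x) (hp.pos x)
  have hgp (x : ℝ) : 0 < g x * p x := mul_pos (hg.pos x) (hp.pos x)
  rw [hp.integral_densityMeasure, hp.integral_densityMeasure]
  set F := ∫ x in Set.Ioi 0, f x * p x
  set G := ∫ x in Set.Ioi 0, g x * p x
  have hF : 0 < F := integral_Ioi_pos hfp hfi
  have hG : 0 < G := integral_Ioi_pos hgp hgi
  refine Real.sqrt_le_one.1 ?_
  refine hφ.le_one_of_sq_mul_le hp (.normalize (hf.continuous.mul hp.continuous) hfp hfi)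
    (.normalize (hg.continuous.mul hp.continuous) hgp hgi) fun x y _ _ => ?_
  rw [Real.sq_sqrt (mul_pos hF hG).le]
  calc F * G * (f x * p x / F * (g y * p y / G)) = p x * p y * (f x * g y) := by field_simp
    _ ≤ p x * p y * Real.exp (φ (cumHazard p x - cumHazard p y)) :=
      mul_le_mul_of_nonneg_left (hfg x y) (mul_pos (hp.pos x) (hp.pos y)).le

end IsTauCost

end TauCost

/-- A cost admissible for `IsTauCost`, quadratic near `0` and linear at infinity. -/
def tauCost (x : ℝ) : ℝ := (√(1 + x ^ 2) - 1) / 8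

theorem one_le_sqrt_one_add_sq (x : ℝ) : 1 ≤ √(1 + x ^ 2) :=
  Real.one_le_sqrt.2 (le_add_of_nonneg_right (sq_nonneg x))

theorem tauCost_nonneg (x : ℝ) : 0 ≤ tauCost x :=
  div_nonneg (sub_nonneg.2 (one_le_sqrt_one_add_sq x)) (by norm_num)

theorem tauCost_le_tauCost {x y : ℝ} (h : |x| ≤ |y|) : tauCost x ≤ tauCost y := by
  have := sq_le_sq.2 h
  unfold tauCost
  gcongr

theorem isTauCost_tauCost : IsTauCost tauCost fun x => x / √(1 + x ^ 2) / 8 where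
  map_zero := by simp [tauCost]
  hasDerivAt x := by
    have hsq : HasDerivAt (fun x : ℝ => 1 + x ^ 2) (2 * x) x := by
      simpa using (hasDerivAt_pow 2 x).const_add 1
    convert! ((hsq.sqrt (by positivity)).sub_const 1).div_const 8 using 1
    field_simp
  one_le_exp_mul x := by
    have hs := one_le_sqrt_one_add_sq x
    have hsq : √(1 + x ^ 2) ^ 2 = 1 + x ^ 2 := Real.sq_sqrt (by positivity)
    have hexp := Real.add_one_le_exp (tauCost x)
    unfold tauCost at hexp ⊢
    set s := √(1 + x ^ 2)
    have hspeed : 1 - 4 * (x / s / 8) ^ 2 = (15 * s ^ 2 + 1) / (16 * s ^ 2) := by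
      field_simp
      linarith
    have hs0 : 0 ≤ (s - 1) ^ 2 * (15 * s + 7) := by positivity
    calc 1 ≤ ((s - 1) / 8 + 1) * ((15 * s ^ 2 + 1) / (16 * s ^ 2)) := by
          rw [← mul_div_assoc, one_le_div (by positivity)]
          linarith
      _ ≤ _ := by
          rw [hspeed]
          exact mul_le_mul_of_nonneg_right hexp (by positivity)

theorem sq_le_mul_tauCost {x : ℝ} (h : |x| ≤ 1) : x ^ 2 ≤ 24 * tauCost x := by
  have hs := one_le_sqrt_one_add_sq x
  have hsq : √(1 + x ^ 2) ^ 2 = 1 + x ^ 2 := Real.sq_sqrt (by positivity)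
  have hx : x ^ 2 ≤ 1 := (sq_le_one_iff_abs_le_one x).2 h
  unfold tauCost
  nlinarith

theorem abs_le_mul_tauCost {x : ℝ} (h : 1 ≤ |x|) : |x| ≤ 24 * tauCost x := by
  have hs : 1 + |x| / 3 ≤ √(1 + x ^ 2) := by
    refine Real.le_sqrt_of_sq_le ?_
    rw [← sq_abs x]
    nlinarith
  unfold tauCost
  linarith

section SumCost

variable {ι : Type*} [Fintype ι] {φ : ℝ → ℝ} {K : NNReal}

theorem lipschitzWith_sum_sub_left (hφ : LipschitzWith K φ) (w : ι → ℝ) :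
    LipschitzWith (∑ _i : ι, K) fun v : ι → ℝ => ∑ i, φ (v i - w i) :=
  lipschitzWith_sum fun i _ => by
    simpa [Function.comp_def] using
      hφ.comp ((LipschitzWith.eval (α := fun _ : ι => ℝ) i).sub (.const (w i)))

theorem lipschitzWith_sum_sub_right (hφ : LipschitzWith K φ) (v : ι → ℝ) :
    LipschitzWith (∑ _i : ι, K) fun w : ι → ℝ => ∑ i, φ (v i - w i) :=
  lipschitzWith_sum fun i _ => by
    simpa [Function.comp_def] using
      hφ.comp ((LipschitzWith.const (v i)).sub (.eval (α := fun _ : ι => ℝ) i))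

end SumCost

/-! ### The measure `μ_α` -/

section MuAlpha

/-- The density of `muAlpha α` on `(0, ∞)`. At negative `x` it is the junk but positive and
continuous `Real.rpow` that enters. -/
def muDensity (α x : ℝ) : ℝ := Real.exp (-x ^ α) / ∫ t in Set.Ioi 0, Real.exp (-t ^ α)

/-- The shift, with `muShift α ^ α = 2 / α`, that makes `t ↦ (muShift α + t) ^ α` smooth at `0` and
slowly varying compared with `muDensity α`. -/
def muShift (α : ℝ) : ℝ := (2 / α) ^ (1 / α)

/-- The scale in which `muAlpha α` is comparable with the exponential law, normalised to vanish on
`(-∞, 0]`. -/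
def muScale (α x : ℝ) : ℝ := (muShift α + max x 0) ^ α / 2 - 1 / α

variable {α : ℝ}

theorem continuous_exp_neg_rpow (hα : 0 < α) : Continuous fun x : ℝ => Real.exp (-x ^ α) :=
  Real.continuous_exp.comp (Real.continuous_rpow_const hα.le).neg

theorem integrableOn_exp_neg_rpow (hα : 0 < α) :
    IntegrableOn (fun x : ℝ => Real.exp (-x ^ α)) (Set.Ioi 0) := by
  simpa using integrableOn_rpow_mul_exp_neg_rpow (s := 0) (by norm_num) hα

theorem isPosDensity_muDensity (hα : 0 < α) : IsPosDensity (muDensity α) :=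
  .normalize (continuous_exp_neg_rpow hα) (fun _ => Real.exp_pos _) (integrableOn_exp_neg_rpow hα)

theorem muKernel_eq_withDensity (α : ℝ) :
    muKernel α = (volume.restrict (Set.Ioi 0)).withDensity
      fun x => ENNReal.ofReal (Real.exp (-x ^ α)) := by
  rw [Measure.restrict_congr_set Ioi_ae_eq_Ici, ← withDensity_indicator measurableSet_Ici]
  rfl

theorem muAlpha_eq_densityMeasure (hα : 0 < α) : muAlpha α = densityMeasure (muDensity α) := by
  have hpos := integral_Ioi_pos (fun x => Real.exp_pos (-x ^ α)) (integrableOn_exp_neg_rpow hα)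
  have hmeas := (continuous_exp_neg_rpow hα).measurable.ennreal_ofReal
  have huniv : muKernel α Set.univ = ENNReal.ofReal (∫ t in Set.Ioi 0, Real.exp (-t ^ α)) := by
    rw [muKernel_eq_withDensity, withDensity_apply _ .univ, Measure.restrict_univ,
      ofReal_integral_eq_lintegral_ofReal (integrableOn_exp_neg_rpow hα)
        (ae_of_all _ fun x => (Real.exp_pos _).le)]
  rw [muAlpha, huniv, muKernel_eq_withDensity, densityMeasure, ← withDensity_smul _ hmeas]
  congr 1 with x
  rw [muDensity, ENNReal.ofReal_div_of_pos hpos, Pi.smul_apply, smul_eq_mul, mul_comm,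
    ENNReal.div_eq_inv_mul, mul_comm]

theorem isProbabilityMeasure_muAlpha (hα : 0 < α) : IsProbabilityMeasure (muAlpha α) := by
  rw [muAlpha_eq_densityMeasure hα]
  exact (isPosDensity_muDensity hα).isProbabilityMeasure

theorem muShift_pos (hα : 0 < α) : 0 < muShift α := Real.rpow_pos_of_pos (by positivity) _

theorem muShift_rpow (hα : 0 < α) : muShift α ^ α = 2 / α := by
  rw [muShift, one_div, Real.rpow_inv_rpow (by positivity) hα.ne']

theorem muScale_of_nonpos (hα : 0 < α) {x : ℝ} (hx : x ≤ 0) : muScale α x = 0 := by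
  rw [muScale, max_eq_right hx, add_zero, muShift_rpow hα]
  ring

theorem continuous_muScale (hα : 0 < α) : Continuous (muScale α) :=
  (((Real.continuous_rpow_const hα.le).comp
    (continuous_const.add (continuous_id.max continuous_const))).div_const 2).sub continuous_const

theorem monotone_muScale (hα : 0 < α) : Monotone (muScale α) := by
  intro x y hxy
  have := muShift_pos hα
  unfold muScale
  gcongr

theorem muScale_nonneg (hα : 0 < α) (x : ℝ) : 0 ≤ muScale α x := by
  rw [← muScale_of_nonpos hα (min_le_right x 0)]
  exact monotone_muScale hα (min_le_left x 0)

theorem hasDerivAt_muScale (hα : 0 < α) {x : ℝ} (hx : 0 < x) :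
    HasDerivAt (muScale α) (α * (muShift α + x) ^ (α - 1) / 2) x := by
  refine HasDerivAt.congr_of_eventuallyEq
    (((hasDerivAt_const_add_rpow (add_pos (muShift_pos hα) hx).ne' α).div_const 2).sub_const
      (1 / α)) ?_
  filter_upwards [lt_mem_nhds hx] with y hy
  rw [muScale, max_eq_left hy.le]

theorem hasDerivAt_muDensity {x : ℝ} (hx : x ≠ 0) :
    HasDerivAt (muDensity α) (-(α * x ^ (α - 1)) * muDensity α x) x := by
  convert! ((Real.hasDerivAt_rpow_const (p := α) (.inl hx)).neg.exp).div_const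
    (∫ t in Set.Ioi 0, Real.exp (-t ^ α)) using 1
  simp only [muDensity, Pi.neg_apply]
  ring

theorem muDensity_le_neg_deriv (hα : 0 < α) (hα1 : α ≤ 1) {x : ℝ} (hx : 0 < x) :
    muDensity α x ≤ -(2 / α * ((1 - α) * (muShift α + x) ^ (-α)) * muDensity α x +
      2 / α * (muShift α + x) ^ (1 - α) * (-(α * x ^ (α - 1)) * muDensity α x)) := by
  have hb := muShift_pos hα
  have hbx : 0 < muShift α + x := add_pos hb hx
  have hshift : 2 / α * (muShift α + x) ^ (-α) ≤ 1 := by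
    rw [Real.rpow_neg hbx.le, ← div_eq_mul_inv, div_le_one (by positivity), ← muShift_rpow hα]
    exact Real.rpow_le_rpow hb.le (le_add_of_nonneg_right hx.le) hα.le
  have hratio : 1 ≤ (muShift α + x) ^ (1 - α) * x ^ (α - 1) := by
    rw [← neg_sub 1 α, Real.rpow_neg hx.le, ← div_eq_mul_inv, one_le_div (by positivity)]
    exact Real.rpow_le_rpow hx.le (le_add_of_nonneg_left hb.le) (sub_nonneg.2 hα1)
  have hcoef : 1 ≤ 2 * ((muShift α + x) ^ (1 - α) * x ^ (α - 1)) -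
      (1 - α) * (2 / α * (muShift α + x) ^ (-α)) := by
    nlinarith [mul_le_mul_of_nonneg_left hshift (sub_nonneg.2 hα1)]
  calc muDensity α x = 1 * muDensity α x := (one_mul _).symm
    _ ≤ _ := mul_le_mul_of_nonneg_right hcoef ((isPosDensity_muDensity hα).pos x).le
    _ = _ := by field_simp; ring

theorem exp_neg_cumHazard_muDensity_le (hα : 0 < α) (hα1 : α ≤ 1) {x : ℝ} (hx : 0 ≤ x) :
    Real.exp (-cumHazard (muDensity α) x) ≤
      2 / α * (muShift α + x) ^ (1 - α) * muDensity α x := by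
  have hp := isPosDensity_muDensity hα
  have hb := muShift_pos hα
  rw [← hp.integral_Ioi_eq_exp_neg_cumHazard hx]
  refine integral_Ioi_le_of_le_neg_deriv
    (g := fun t => 2 / α * (muShift α + t) ^ (1 - α) * muDensity α t)
    (g' := fun t => -(2 / α * ((1 - α) * (muShift α + t) ^ (-α)) * muDensity α t +
      2 / α * (muShift α + t) ^ (1 - α) * (-(α * t ^ (α - 1)) * muDensity α t)))
    (fun t ht => ?_) ?_ (fun t ht => ?_) (hp.integrableOn.mono_set (Set.Ioi_subset_Ioi hx))
    fun t ht => muDensity_le_neg_deriv hα hα1 (hx.trans_lt ht)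
  · have := hp.pos t
    have := hx.trans ht
    positivity
  · exact (continuousOn_const.mul (ContinuousOn.rpow_const (by fun_prop)
      fun t _ => .inr (sub_nonneg.2 hα1))).mul hp.continuous.continuousOn
  · have ht0 : 0 < t := hx.trans_lt ht
    have hshift := hasDerivAt_const_add_rpow (add_pos hb ht0).ne' (1 - α)
    rw [sub_sub_cancel_left] at hshift
    rw [neg_neg]
    exact (hshift.const_mul (2 / α)).mul (hasDerivAt_muDensity ht0.ne')

theorem monotone_cumHazard_sub_muScale (hα : 0 < α) (hα1 : α ≤ 1) :
    Monotone fun x => cumHazard (muDensity α) x - muScale α x := by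
  have hp := isPosDensity_muDensity hα
  refine MonotoneOn.Iic_union_Ici (a := 0) (fun x hx y hy hxy => ?_) ?_
  · simpa only [muScale_of_nonpos hα hx, muScale_of_nonpos hα hy, sub_zero] using
      hp.monotone_cumHazard hxy
  refine monotoneOn_of_hasDerivWithinAt_nonneg (convex_Ici 0) (fun x _ =>
    ((hp.hasDerivAt_cumHazard x).continuousAt.sub
      (continuous_muScale hα).continuousAt).continuousWithinAt)
    (fun x hx => ((hp.hasDerivAt_cumHazard x).sub (hasDerivAt_muScale hα
      (by simpa using hx))).hasDerivWithinAt) fun x hx => ?_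
  rw [interior_Ici, Set.mem_Ioi] at hx
  have hbx : 0 < muShift α + x := add_pos (muShift_pos hα) hx
  have hpow : (muShift α + x) ^ (α - 1) * (muShift α + x) ^ (1 - α) = 1 := by
    rw [← Real.rpow_add hbx]
    simp
  rw [sub_nonneg, ← neg_neg (cumHazard _ x), Real.exp_neg, ← div_eq_mul_inv,
    le_div_iff₀ (Real.exp_pos _)]
  calc α * (muShift α + x) ^ (α - 1) / 2 * Real.exp (-cumHazard (muDensity α) x)
      ≤ α * (muShift α + x) ^ (α - 1) / 2 *
          (2 / α * (muShift α + x) ^ (1 - α) * muDensity α x) :=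
        mul_le_mul_of_nonneg_left (exp_neg_cumHazard_muDensity_le hα hα1 hx.le) (by positivity)
    _ = (muShift α + x) ^ (α - 1) * (muShift α + x) ^ (1 - α) * muDensity α x := by field_simp
    _ = muDensity α x := by rw [hpow, one_mul]

theorem hasPropertyTau_muAlpha (hα : 0 < α) (hα1 : α ≤ 1) :
    HasPropertyTau (muAlpha α) fun x y => tauCost (muScale α x - muScale α y) := by
  rw [muAlpha_eq_densityMeasure hα]
  exact HasPropertyTau.mono
    (isTauCost_tauCost.hasPropertyTau_densityMeasure (isPosDensity_muDensity hα)) fun x y =>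
      tauCost_le_tauCost <| abs_sub_le_abs_sub_of_monotone (monotone_muScale hα)
        (monotone_cumHazard_sub_muScale hα hα1) x y

theorem exists_muScale_eq (hα : 0 < α) {w : ℝ} (hw : 0 ≤ w) : ∃ t, 0 ≤ t ∧ muScale α t = w := by
  have ht : muShift α ≤ (2 * w + 2 / α) ^ (1 / α) :=
    Real.rpow_le_rpow (by positivity) (le_add_of_nonneg_left (by positivity)) (by positivity)
  refine ⟨(2 * w + 2 / α) ^ (1 / α) - muShift α, sub_nonneg.2 ht, ?_⟩
  rw [muScale, max_eq_left (sub_nonneg.2 ht), add_sub_cancel, one_div,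
    Real.rpow_inv_rpow (by positivity) hα.ne']
  ring

theorem muAlpha_real_lt_muScale_le (hα : 0 < α) (hα1 : α ≤ 1) {w : ℝ} (hw : 0 ≤ w) :
    (muAlpha α).real {x | w < muScale α x} ≤ Real.exp (-w) := by
  obtain ⟨t, ht, rfl⟩ := exists_muScale_eq hα hw
  have hp := isPosDensity_muDensity hα
  have := hp.isProbabilityMeasure
  have hscale : muScale α t ≤ cumHazard (muDensity α) t := by
    simpa [cumHazard_zero, muScale_of_nonpos hα le_rfl] using
      monotone_cumHazard_sub_muScale hα hα1 ht
  rw [muAlpha_eq_densityMeasure hα]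
  calc (densityMeasure (muDensity α)).real {x | muScale α t < muScale α x}
      ≤ (densityMeasure (muDensity α)).real (Set.Ioi t) :=
        measureReal_mono fun x hx => (monotone_muScale hα).reflect_lt hx
    _ = Real.exp (-cumHazard (muDensity α) t) := hp.measureReal_Ioi ht
    _ ≤ Real.exp (-muScale α t) := Real.exp_le_exp.2 (neg_le_neg hscale)

end MuAlpha

/-! ### From costs to balls -/

theorem abs_sub_le_of_muScale {α x y : ℝ} (hα : 0 < α) (hα1 : α ≤ 1) (hx : 0 ≤ x) (hy : 0 ≤ y) :
    |x - y| ≤ 1 / α * 2 ^ (1 / α - 1) *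
      ((2 / α + 2 * muScale α y) ^ (1 / α - 1) * |2 * (muScale α x - muScale α y)| +
        |2 * (muScale α x - muScale α y)| ^ (1 / α)) := by
  have hb := muShift_pos hα
  have hpow : ∀ t, 0 ≤ t → 2 / α + 2 * muScale α t = (muShift α + t) ^ α := fun t ht => by
    rw [muScale, max_eq_left ht]
    ring
  have hinv : ∀ t, 0 ≤ t → ((muShift α + t) ^ α) ^ (1 / α) = muShift α + t := fun t ht => by
    rw [one_div, Real.rpow_rpow_inv (by positivity) hα.ne']
  have hdiff : 2 * (muScale α x - muScale α y) = (muShift α + x) ^ α - (muShift α + y) ^ α := by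
    rw [← hpow x hx, ← hpow y hy]
    ring
  have hle := abs_rpow_sub_rpow_le ((one_le_div hα).2 hα1)
    (by positivity : 0 ≤ (muShift α + y) ^ α) (by positivity : 0 ≤ (muShift α + x) ^ α)
  rwa [hinv x hx, hinv y hy, add_sub_add_left_eq_sub, ← hdiff, ← hpow y hy] at hle

theorem abs_sub_le_of_muScale_le {α K L w x y : ℝ} (hα : 0 < α) (hα1 : α ≤ 1) (hK : 1 ≤ K)
    (hL : (2 / α + 2 * w) ^ (1 / α - 1) ≤ K * L) (hx : 0 ≤ x) (hy : 0 ≤ y) (hyw : muScale α y ≤ w) :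
    |x - y| ≤ 1 / α * 2 ^ (1 / α - 1) * 2 ^ (1 / α) * K *
      (L * |muScale α x - muScale α y| + |muScale α x - muScale α y| ^ (1 / α)) := by
  have hβ : 1 ≤ 1 / α := (one_le_div hα).2 hα1
  have hVy := muScale_nonneg hα y
  refine (abs_sub_le_of_muScale hα hα1 hx hy).trans ?_
  rw [abs_mul, abs_two, Real.mul_rpow two_pos.le (abs_nonneg _)]
  generalize 1 / α = β at *
  set h := |muScale α x - muScale α y|
  have : 0 ≤ h := abs_nonneg _
  have h2β : 2 ≤ (2 : ℝ) ^ β := Real.self_le_rpow_of_one_le one_le_two hβ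
  have hu : (2 / α + 2 * muScale α y) ^ (β - 1) ≤ K * L :=
    (Real.rpow_le_rpow (by positivity) (by linarith) (by linarith)).trans hL
  have hKL : 0 ≤ K * L := (Real.rpow_nonneg (by positivity) _).trans hu
  calc β * 2 ^ (β - 1) * ((2 / α + 2 * muScale α y) ^ (β - 1) * (2 * h) + 2 ^ β * h ^ β)
      ≤ β * 2 ^ (β - 1) * (K * L * (2 ^ β * h) + 2 ^ β * (K * h ^ β)) := by
        gcongr
        exact le_mul_of_one_le_left (by positivity) hK
    _ = β * 2 ^ (β - 1) * 2 ^ β * K * (L * h + h ^ β) := by ring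

theorem exists_abs_sub_le_muScale {α : ℝ} (hα : 0 < α) (hα1 : α ≤ 1) :
    ∃ K, 1 ≤ K ∧ ∀ n : ℕ, 2 ≤ n → ∀ C : ℝ, 1 ≤ C →
      1 ≤ K * (C * Real.log n ^ (1 / α - 1)) ∧ ∀ x y : ℝ, 0 ≤ x → 0 ≤ y →
        muScale α y ≤ Real.log (n * C) →
        |x - y| ≤ K * (C * Real.log n ^ (1 / α - 1) * |muScale α x - muScale α y| +
          |muScale α x - muScale α y| ^ (1 / α)) := by
  have hβ : 1 ≤ 1 / α := (one_le_div hα).2 hα1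
  have hγ : 0 ≤ 1 / α - 1 := sub_nonneg.2 hβ
  have hB : 1 ≤ 2 / α := (one_le_div hα).2 (hα1.trans one_le_two)
  set K₁ := ((2 * (2 / α) + 4) * (1 + (1 / α - 1))) ^ (1 / α - 1)
  have hK₁ : 1 ≤ K₁ := Real.one_le_rpow (by nlinarith) hγ
  have hK₀ : 1 ≤ 1 / α * 2 ^ (1 / α - 1) * (2 : ℝ) ^ (1 / α) :=
    one_le_mul_of_one_le_of_one_le (one_le_mul_of_one_le_of_one_le hβ
      (Real.one_le_rpow one_le_two hγ)) (Real.one_le_rpow one_le_two (by positivity))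
  refine ⟨_, one_le_mul_of_one_le_of_one_le hK₀ hK₁, fun n hn C hC => ?_⟩
  have hL := add_log_mul_rpow_le (zero_le_one.trans hB) hγ hC hn
  have hn1 : (1 : ℝ) ≤ n := by exact_mod_cast one_le_two.trans hn
  have hlog := Real.log_nonneg (one_le_mul_of_one_le_of_one_le hn1 hC)
  refine ⟨?_, fun x y => abs_sub_le_of_muScale_le hα hα1 hK₁ hL⟩
  rw [mul_assoc]
  exact one_le_mul_of_one_le_of_one_le hK₀ ((Real.one_le_rpow (by linarith) hγ).trans hL)

theorem mem_smul_lpBall {p s : ℝ} (hp : 0 < p) (hs : 0 < s) {n : ℕ} {v : Fin n → ℝ}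
    (h : ∑ i, |v i| ^ p ≤ s ^ p) : v ∈ s • lpBall p n := by
  refine Set.mem_smul_set.2 ⟨s⁻¹ • v, ?_, smul_inv_smul₀ hs.ne' v⟩
  have hterm : ∀ i, |(s⁻¹ • v) i| ^ p = |v i| ^ p / s ^ p := fun i => by
    rw [Pi.smul_apply, smul_eq_mul, abs_mul, abs_of_pos (inv_pos.2 hs), inv_mul_eq_div,
      Real.div_rpow (abs_nonneg _) hs.le]
  refine Real.rpow_le_one (by positivity) ?_ (by positivity)
  simp only [hterm, ← Finset.sum_div]
  exact div_le_one_of_le₀ h (by positivity)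

theorem exists_split_of_abs_le {α K L d h : ℝ} (hα : 0 < α) (hα1 : α ≤ 1) (hK : 1 ≤ K)
    (hKL : 1 ≤ K * L) (hd : |d| ≤ K * (L * |h| + |h| ^ (1 / α))) :
    ∃ d₀ d₁ d₂, d = L * (d₀ + d₁) + d₂ ∧ |d₀| ^ 2 ≤ 96 * K ^ 4 * tauCost h ∧
      |d₁| ≤ 96 * K ^ 4 * tauCost h ∧ |d₂| ^ α ≤ 96 * K ^ 4 * tauCost h := by
  have hK0 : 0 < K := one_pos.trans_le hK
  have hL : 0 < L := pos_of_mul_pos_right (one_pos.trans_le hKL) hK0.le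
  have hcost := mul_nonneg (by positivity : 0 ≤ 96 * K ^ 4) (tauCost_nonneg h)
  rcases le_total |h| 1 with hsmall | hlarge
  · have hpow : |h| ^ (1 / α) ≤ K * L * |h| :=
      (Real.rpow_le_self_of_le_one (abs_nonneg h) hsmall ((one_le_div hα).2 hα1)).trans
        (le_mul_of_one_le_left (abs_nonneg h) hKL)
    refine ⟨d / L, 0, 0, by field_simp; ring, ?_, by simpa using hcost,
      by simpa [Real.zero_rpow hα.ne'] using hcost⟩
    have hdL : |d / L| ≤ 2 * K ^ 2 * |h| := by
      rw [abs_div, abs_of_pos hL, div_le_iff₀ hL]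
      calc |d| ≤ K * (L * |h| + K * L * |h|) := hd.trans (by gcongr)
        _ ≤ K * (K * (L * |h|) + K * L * |h|) :=
          mul_le_mul_of_nonneg_left
            (add_le_add_left (le_mul_of_one_le_left (by positivity) hK) _) hK0.le
        _ = 2 * K ^ 2 * |h| * L := by ring
    calc |d / L| ^ 2 ≤ (2 * K ^ 2 * |h|) ^ 2 := by gcongr
      _ = 4 * K ^ 4 * h ^ 2 := by rw [mul_pow, sq_abs]; ring
      _ ≤ 4 * K ^ 4 * (24 * tauCost h) := by gcongr; exact sq_le_mul_tauCost hsmall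
      _ = 96 * K ^ 4 * tauCost h := by ring
  · have hKh : K * |h| ≤ 96 * K ^ 4 * tauCost h := by
      calc K * |h| ≤ 4 * K ^ 4 * (24 * tauCost h) := by
            gcongr
            · nlinarith [one_le_pow₀ hK (n := 3)]
            · exact abs_le_mul_tauCost hlarge
        _ = 96 * K ^ 4 * tauCost h := by ring
    rw [mul_add] at hd
    obtain ⟨e₁, e₂, rfl, he₁, he₂⟩ :=
      exists_add_eq_of_abs_le_add (by positivity) (by positivity) hd
    refine ⟨0, e₁ / L, e₂, by field_simp; ring, by simpa using hcost, ?_, ?_⟩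
    · rw [abs_div, abs_of_pos hL, div_le_iff₀ hL]
      nlinarith
    · calc |e₂| ^ α ≤ (K * |h| ^ (1 / α)) ^ α := by gcongr
        _ = K ^ α * |h| := by
          rw [Real.mul_rpow hK0.le (by positivity), one_div,
            Real.rpow_inv_rpow (abs_nonneg h) hα.ne']
        _ ≤ K * |h| := by gcongr; exact Real.rpow_le_self_of_one_le hK hα1
        _ ≤ _ := hKh

/-- The set `L (√r B_{ℓ²} + r B_{ℓ¹}) + r^{1/α} B_{ℓ^α}`, by which sets are enlarged. -/
def mixedBall (α : ℝ) (n : ℕ) (L r : ℝ) : Set (Fin n → ℝ) :=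
  L • (√r • lpBall 2 n + r • lpBall 1 n) + r ^ (1 / α) • lpBall α n

theorem mem_mixedBall {α K L r : ℝ} (hα : 0 < α) (hα1 : α ≤ 1) (hK : 1 ≤ K) (hKL : 1 ≤ K * L)
    (hr : 0 < r) {n : ℕ} {d h : Fin n → ℝ}
    (hd : ∀ i, |d i| ≤ K * (L * |h i| + |h i| ^ (1 / α)))
    (hcost : 96 * K ^ 4 * ∑ i, tauCost (h i) ≤ r) : d ∈ mixedBall α n L r := by
  rw [Finset.mul_sum] at hcost
  choose d₀ d₁ d₂ hsplit h₀ h₁ h₂ using fun i => exists_split_of_abs_le hα hα1 hK hKL (hd i)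
  obtain rfl : d = L • (d₀ + d₁) + d₂ := funext hsplit
  refine Set.add_mem_add (Set.smul_mem_smul_set (Set.add_mem_add ?_ ?_)) ?_
  · refine mem_smul_lpBall two_pos (Real.sqrt_pos.2 hr) ?_
    simp only [Real.rpow_two, Real.sq_sqrt hr.le]
    exact (Finset.sum_le_sum fun i _ => h₀ i).trans hcost
  · refine mem_smul_lpBall one_pos hr ?_
    simp only [Real.rpow_one]
    exact (Finset.sum_le_sum fun i _ => h₁ i).trans hcost
  · refine mem_smul_lpBall hα (by positivity) ?_
    rw [one_div, Real.rpow_inv_rpow hr.le hα.ne']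
    exact (Finset.sum_le_sum fun i _ => h₂ i).trans hcost

/-! ### The deviation inequality -/

theorem pi_real_sub_le_real_inter {ι : Type*} [Fintype ι] {X : ι → Type*}
    [∀ i, MeasurableSpace (X i)] {μ : ∀ i, Measure (X i)} [∀ i, IsProbabilityMeasure (μ i)]
    (A : Set (∀ i, X i)) {s : ∀ i, Set (X i)} (hs : ∀ i, MeasurableSet (s i)) :
    (Measure.pi μ).real A - ∑ i, (μ i).real (s i)ᶜ ≤ (Measure.pi μ).real (A ∩ Set.univ.pi s) := by
  have hcover : A ⊆ (A ∩ Set.univ.pi s) ∪ ⋃ i ∈ Finset.univ, Function.eval i ⁻¹' (s i)ᶜ := by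
    intro x hx
    by_cases h : ∀ i, x i ∈ s i
    · exact .inl ⟨hx, fun i _ => h i⟩
    · obtain ⟨i, hi⟩ := not_forall.1 h
      exact .inr (Set.mem_biUnion (Finset.mem_univ i) hi)
  have hcoord : ∀ i, (Measure.pi μ).real (Function.eval i ⁻¹' (s i)ᶜ) = (μ i).real (s i)ᶜ :=
    fun i => (measurePreserving_eval μ i).measureReal_preimage (hs i).compl.nullMeasurableSet
  rw [sub_le_iff_le_add]
  calc (Measure.pi μ).real A
      ≤ (Measure.pi μ).real (A ∩ Set.univ.pi s) +
          (Measure.pi μ).real (⋃ i ∈ Finset.univ, Function.eval i ⁻¹' (s i)ᶜ) :=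
        (measureReal_mono hcover).trans (measureReal_union_le _ _)
    _ ≤ (Measure.pi μ).real (A ∩ Set.univ.pi s) + ∑ i, (μ i).real (s i)ᶜ := by
        simp only [← hcoord]
        gcongr
        exact measureReal_biUnion_finset_le _ _

section Deviation

variable {α : ℝ} {n : ℕ}

theorem isProbabilityMeasure_muPi (hα : 0 < α) (n : ℕ) : IsProbabilityMeasure (muPi α n) := by
  have := isProbabilityMeasure_muAlpha hα
  unfold muPi
  infer_instance

theorem ae_muPi_nonneg (hα : 0 < α) (n : ℕ) : ∀ᵐ x ∂muPi α n, ∀ i, 0 ≤ x i := by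
  have := isProbabilityMeasure_muAlpha hα
  have hcoord : ∀ᵐ t ∂muAlpha α, 0 ≤ t := by
    rw [muAlpha_eq_densityMeasure hα]
    exact ae_nonneg_densityMeasure _
  exact eventually_all.2 fun i => Measure.tendsto_eval_ae_ae.eventually hcoord

theorem muPi_real_mul_muPi_real_le (hα : 0 < α) (hα1 : α ≤ 1) (A : Set (Fin n → ℝ)) (ρ : ℝ) :
    (muPi α n).real {x | ∀ k ∈ A, ρ ≤ ∑ i, tauCost (muScale α (x i) - muScale α (k i))} *
      (muPi α n).real A ≤ Real.exp (-ρ) := by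
  have := isProbabilityMeasure_muAlpha hα
  have := isProbabilityMeasure_muPi hα n
  have hlip := isTauCost_tauCost.lipschitzWith
  have hτ : HasPropertyTau (muPi α n) fun x y =>
      ∑ i, tauCost (muScale α (x i) - muScale α (y i)) :=
    HasPropertyTau.pi fun _ => hasPropertyTau_muAlpha hα hα1
  have hV : Continuous fun (x : Fin n → ℝ) i => muScale α (x i) :=
    continuous_pi fun i => (continuous_muScale hα).comp (continuous_apply i)
  exact HasPropertyTau.measureReal_mul_measureReal_le
    (c := fun v w : Fin n → ℝ => ∑ i, tauCost (v i - w i)) hV hτ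
    (fun v w => Finset.sum_nonneg fun i _ => tauCost_nonneg _)
    (lipschitzWith_sum_sub_left hlip) (lipschitzWith_sum_sub_right hlip) A ρ

/-- The part of `A` with nonnegative coordinates on which `muScale α` stays below `w`. -/
def truncation (α w : ℝ) (A : Set (Fin n → ℝ)) : Set (Fin n → ℝ) :=
  {k ∈ A | ∀ i, 0 ≤ k i ∧ muScale α (k i) ≤ w}

theorem muPi_real_sub_le_truncation (hα : 0 < α) (hα1 : α ≤ 1) {w : ℝ} (hw : 0 ≤ w)
    (A : Set (Fin n → ℝ)) :
    (muPi α n).real A - n * Real.exp (-w) ≤ (muPi α n).real (truncation α w A) := by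
  have := isProbabilityMeasure_muAlpha hα
  have hs : MeasurableSet {t | muScale α t ≤ w} :=
    measurableSet_le (continuous_muScale hα).measurable measurable_const
  have htail : (muAlpha α).real {t | muScale α t ≤ w}ᶜ ≤ Real.exp (-w) := by
    simpa only [Set.compl_ofPred, not_le] using muAlpha_real_lt_muScale_le hα hα1 hw
  have hae : truncation α w A =ᵐ[muPi α n]
      (A ∩ Set.univ.pi fun _ => {t | muScale α t ≤ w} : Set (Fin n → ℝ)) := by
    filter_upwards [ae_muPi_nonneg hα n] with x hx
    exact propext (and_congr_right fun _ =>
      ⟨fun h i _ => (h i).2, fun h i => ⟨hx i, h i trivial⟩⟩)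
  have hinter := pi_real_sub_le_real_inter (μ := fun _ : Fin n => muAlpha α) A fun _ => hs
  rw [Finset.sum_const, Finset.card_univ, Fintype.card_fin, nsmul_eq_mul] at hinter
  rw [measureReal_congr hae]
  refine le_trans ?_ hinter
  rw [muPi]
  gcongr

theorem le_sum_tauCost_of_notMem_add_mixedBall {K L r w : ℝ} (hα : 0 < α) (hα1 : α ≤ 1) (hK : 1 ≤ K)
    (hKL : 1 ≤ K * L) (hr : 0 < r) (hdist : ∀ x y, 0 ≤ x → 0 ≤ y → muScale α y ≤ w →
      |x - y| ≤ K * (L * |muScale α x - muScale α y| + |muScale α x - muScale α y| ^ (1 / α)))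
    (A : Set (Fin n → ℝ)) {x : Fin n → ℝ} (hx : ∀ i, 0 ≤ x i) (hxA : x ∉ A + mixedBall α n L r) :
    ∀ k ∈ truncation α w A,
      (96 * K ^ 4)⁻¹ * r ≤ ∑ i, tauCost (muScale α (x i) - muScale α (k i)) := by
  rintro k ⟨hkA, hk⟩
  by_contra! hlt
  refine hxA ⟨k, hkA, x - k, mem_mixedBall hα hα1 hK hKL hr
    (fun i => hdist _ _ (hx i) (hk i).1 (hk i).2) ?_, add_sub_cancel k x⟩
  rw [← le_inv_mul_iff₀ (by positivity)]
  exact hlt.le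

end Deviation

theorem deviation_inequality_muAlpha_general (α : ℝ) (hα0 : 0 < α) (hα1 : α ≤ 1) :
    ∃ c > (0 : ℝ), ∀ n : ℕ, 2 ≤ n → ∀ r > (0 : ℝ), ∀ A : Set (Fin n → ℝ), ∀ C > (0 : ℝ),
      1 / C < (muPi α n A).toReal →
      (muPi α n
        (A + (C * Real.log n ^ (1/α - 1)) •
            (Real.sqrt r • lpBall 2 n + r • lpBall 1 n) +
          r ^ (1/α) • lpBall α n)ᶜ).toReal ≤
        Real.exp (-c * r) / ((muPi α n A).toReal - 1 / C) := by
  obtain ⟨K, hK, hdist⟩ := exists_abs_sub_le_muScale hα0 hα1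
  refine ⟨(96 * K ^ 4)⁻¹, by positivity, fun n hn r hr A C hC hCA => ?_⟩
  have := isProbabilityMeasure_muPi hα0 n
  have hC1 : 1 ≤ C := (inv_le_one₀ hC).1 (by simpa using (hCA.trans_le measureReal_le_one).le)
  obtain ⟨hKL, hdist⟩ := hdist n hn C hC1
  have hn1 : (1 : ℝ) ≤ n := by exact_mod_cast one_le_two.trans hn
  have htrunc := muPi_real_sub_le_truncation hα0 hα1
    (Real.log_nonneg (one_le_mul_of_one_le_of_one_le hn1 hC1)) A
  have hexp : n * Real.exp (-Real.log (n * C)) = 1 / C := by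
    rw [Real.exp_neg, Real.exp_log (by positivity)]
    field_simp
  rw [hexp] at htrunc
  rw [add_assoc, le_div_iff₀ (sub_pos.2 hCA), neg_mul]
  refine (mul_le_mul (ENNReal.toReal_mono (measure_ne_top _ _) (measure_mono_ae ?_)) htrunc
    (sub_pos.2 hCA).le measureReal_nonneg).trans (muPi_real_mul_muPi_real_le hα0 hα1 _ _)
  filter_upwards [ae_muPi_nonneg hα0 n] with x hx hxA
  exact le_sum_tauCost_of_notMem_add_mixedBall hα0 hα1 hK hKL hr hdist A hx hxA

/-- Proposition (two-level deviation inequality for `μ_α^n`, `α ∈ (0,1)`). -/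
theorem deviation_inequality_muAlpha (α : ℝ) (hα0 : 0 < α) (hα1 : α < 1) :
    ∃ c > (0 : ℝ), ∀ n : ℕ, 2 ≤ n → ∀ r > (0 : ℝ), ∀ A : Set (Fin n → ℝ),
      MeasurableSet A → (∀ x ∈ A, ∀ i, 0 ≤ x i) → ∀ C > (0 : ℝ),
        1 / C < (muPi α n A).toReal →
        (muPi α n
          (A + (C * Real.log n ^ (1/α - 1)) •
              (Real.sqrt r • lpBall 2 n + r • lpBall 1 n) +
            r ^ (1/α) • lpBall α n)ᶜ).toReal ≤
          Real.exp (-c * r) / ((muPi α n A).toReal - 1 / C) :=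
  let ⟨c, hc, h⟩ := deviation_inequality_muAlpha_general α hα0 hα1.le
  ⟨c, hc, fun n hn r hr A _ _ C hC => h n hn r hr A C hC⟩

end
end

section
/- Let p ∈ [1,2] and let A, B be n×n Hermitian (or real symmetric) matrices. Denote by λ_1↓(A) ≥ … ≥ λ_n↓(A) the eigenvalues of A in non-increasing order (similarly for B), and by λ_1(A−B),…,λ_n(A−B) the eigenvalues of A−B. Then Σ_{i=1}^n | λ_i↓(A) − λ_i↓(B) |^p ≤ Σ_{i=1}^n | λ_i(A−B) |^p ≤ ‖A−B‖_{ℓ^p}^p. In particular W_p(μ_A,μ_B) ≤ n^{-1/p} ‖A−B‖_{ℓ^p}, and consequently d(μ_A, μ_B) ≤ n^{-1/p} ‖A−B‖_{ℓ^p}, i.e. for every z ∈ 𝒦, | g_{μ_A}(z) − g_{μ_B}(z) | ≤ n^{-1/p} ‖A−B‖_{ℓ^p}. -/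
open MeasureTheory Filter Topology

noncomputable section

variable {𝕜 : Type*} [RCLike 𝕜]

/-- The space `H_n^(β)` of self-adjoint `n × n` matrices over `𝕜`. -/
abbrev HermMat (𝕜 : Type*) [RCLike 𝕜] (n : ℕ) := selfAdjoint (Matrix (Fin n) (Fin n) 𝕜)

def hermEntry {n : ℕ} (A : HermMat 𝕜 n) (i j : Fin n) : 𝕜 :=
  (A : Matrix (Fin n) (Fin n) 𝕜) i j

lemma herm_isHermitian {n : ℕ} (A : HermMat 𝕜 n) :
    (A : Matrix (Fin n) (Fin n) 𝕜).IsHermitian := by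
  simpa [Matrix.IsHermitian, ← Matrix.star_eq_conjTranspose] using A.2.star_eq

/-- The eigenvalues of a self-adjoint matrix. -/
def eigs {n : ℕ} (A : HermMat 𝕜 n) : Fin n → ℝ := (herm_isHermitian A).eigenvalues

/-- The non-increasing rearrangement of a tuple of reals. -/
def sortedDesc {n : ℕ} (f : Fin n → ℝ) : Fin n → ℝ :=
  fun i => (f ∘ Tuple.sort f) i.rev

/-- The empirical spectral measure `μ_A = (1/n) ∑ δ_{λ_i}`. -/
def specMeasure {n : ℕ} (A : HermMat 𝕜 n) : Measure ℝ :=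
  ((n : ENNReal))⁻¹ • ∑ i : Fin n, Measure.dirac (eigs A i)

/-- `‖Y‖_{ℓ^p}^p = ∑_{i,j} ‖Y_{i,j}‖^p`. -/
def matLpNormPow (p : ℝ) {n : ℕ} (A : HermMat 𝕜 n) : ℝ :=
  ∑ i, ∑ j, ‖hermEntry A i j‖ ^ p

/-- The Stieltjes transform `g_μ(z) = ∫ dμ(t)/(z - t)`. -/
def stieltjesT (μ : Measure ℝ) (z : ℂ) : ℂ := ∫ t, (z - (t : ℂ))⁻¹ ∂μ

/-!
For Hermitian `A`, `B` and real `t`, let `P = (A - B - t)⁺`. Then `A ≤ B + P + t` and `B ≤ B + P`,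
so by Weyl's monotonicity `λᵢ(A) - t` and `λᵢ(B)` are both at most `λᵢ(B + P)`; summing over `i`,
`∑ (λᵢ(A) - λᵢ(B) - t)⁺ ≤ tr P = ∑ (λᵢ(A - B) - t)⁺`. This argument, due to Li and Mathias, says
that the differences of the ordered eigenvalues are weakly majorized by the eigenvalues of `A - B`.
The bound on the sums of `p`-th powers follows because `y ^ p` is a positive superposition of the
functions `(y - t)⁺`.

The squared norms of the columns of a Hermitian matrix are averages of its squared eigenvalues with
doubly stochastic weights, so Jensen's inequality for the concave function `x ^ (p / 2)`, followed
by its subadditivity, bounds the Schatten norm by the entrywise one.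

The coupling of the spectral measures that pairs eigenvalues of the same rank gives the Wasserstein
bound. It passes to the Stieltjes transform since `x ↦ (z - x)⁻¹` is Lipschitz with constant
`(Im z)⁻²`.
-/

/-! ### Weak majorization -/

section WeakMajorization

variable {ι : Type*} [Fintype ι] {a b : ι → ℝ}

/-- Weak majorization `a ≺_w b` of finite families of reals: the sum of the `k` largest entries of
`a` is at most that of `b`, for every `k`. It is encoded by the equivalent Hardy–Littlewood–Pólya
criterion, which requires no rearrangement. -/
def IsWeaklyMajorizedBy (a b : ι → ℝ) : Prop :=
  ∀ t : ℝ, ∑ i, (a i - t)⁺ ≤ ∑ i, (b i - t)⁺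

lemma abs_sub_posPart_of_nonneg {t : ℝ} (ht : 0 ≤ t) (x : ℝ) :
    (|x| - t)⁺ = (x - t)⁺ + (-x - t)⁺ := by
  rcases le_total 0 x with hx | hx
  · rw [abs_of_nonneg hx, posPart_of_nonpos (a := -x - t) (by linarith), add_zero]
  · rw [abs_of_nonpos hx, posPart_of_nonpos (a := x - t) (by linarith), zero_add]

lemma IsWeaklyMajorizedBy.abs (h : IsWeaklyMajorizedBy a b) (hneg : IsWeaklyMajorizedBy (-a) (-b)) :
    IsWeaklyMajorizedBy |a| |b| := by
  have h_nonneg (t : ℝ) (ht : 0 ≤ t) : ∑ i, (|a i| - t)⁺ ≤ ∑ i, (|b i| - t)⁺ := by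
    simp only [abs_sub_posPart_of_nonneg ht, Finset.sum_add_distrib]
    exact add_le_add (h t) (hneg t)
  intro t
  rcases le_total 0 t with ht | ht
  · exact h_nonneg t ht
  · have h_abs : ∑ i, |a i| ≤ ∑ i, |b i| := by
      simpa [posPart_of_nonneg, abs_nonneg] using h_nonneg 0 le_rfl
    have h_shift (x : ℝ) : (|x| - t)⁺ = |x| - t := posPart_of_nonneg (by linarith [abs_nonneg x])
    simpa only [Pi.abs_apply, h_shift, Finset.sum_sub_distrib, sub_le_sub_iff_right] using h_abs

lemma integral_rpow_mul_sub {p : ℝ} (hp : 1 < p) {y : ℝ} (hy : 0 ≤ y) :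
    ∫ t in 0..y, t ^ (p - 2) * (y - t) = y ^ p / (p * (p - 1)) := by
  have h_split : ∫ t in 0..y, t ^ (p - 2) * (y - t) =
      ∫ t in 0..y, (y * t ^ (p - 2) - t ^ (p - 1)) := by
    refine intervalIntegral.integral_congr fun t ht => ?_
    rw [Set.uIcc_of_le hy] at ht
    have ht_pow : t ^ (p - 1) = t ^ (p - 2) * t := by
      rw [← Real.rpow_add_one' ht.1 (by linarith), show p - 2 + 1 = p - 1 by ring]
    simp only [ht_pow]
    ring
  have hy_pow : y ^ p = y ^ (p - 1) * y := by
    rw [← Real.rpow_add_one' hy (by linarith), sub_add_cancel]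
  have hp0 : p ≠ 0 := by linarith
  have hp1 : p - 1 ≠ 0 := by linarith
  rw [h_split, intervalIntegral.integral_sub
      ((intervalIntegral.intervalIntegrable_rpow' (by linarith)).const_mul y)
      (intervalIntegral.intervalIntegrable_rpow' (by linarith)),
    intervalIntegral.integral_const_mul, integral_rpow (Or.inl (by linarith)),
    integral_rpow (Or.inl (by linarith)), show p - 2 + 1 = p - 1 by ring, sub_add_cancel,
    Real.zero_rpow hp1, Real.zero_rpow hp0, hy_pow]
  field_simp
  ring

lemma intervalIntegrable_rpow_mul_posPart {p : ℝ} (hp : 1 < p) (y c d : ℝ) :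
    IntervalIntegrable (fun t : ℝ => t ^ (p - 2) * (y - t)⁺) volume c d :=
  (intervalIntegral.intervalIntegrable_rpow' (by linarith)).mul_continuousOn
    (continuous_posPart.comp (continuous_const.sub continuous_id)).continuousOn

lemma integral_rpow_mul_posPart {p : ℝ} (hp : 1 < p) {y M : ℝ} (hy : 0 ≤ y) (hyM : y ≤ M) :
    ∫ t in 0..M, t ^ (p - 2) * (y - t)⁺ = y ^ p / (p * (p - 1)) := by
  have h_below : ∫ t in 0..y, t ^ (p - 2) * (y - t)⁺ = ∫ t in 0..y, t ^ (p - 2) * (y - t) := by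
    refine intervalIntegral.integral_congr fun t ht => ?_
    rw [Set.uIcc_of_le hy] at ht
    simp only [posPart_of_nonneg (sub_nonneg.2 ht.2)]
  have h_above : ∫ t in y..M, t ^ (p - 2) * (y - t)⁺ = 0 := by
    rw [intervalIntegral.integral_congr (g := fun _ => 0), intervalIntegral.integral_zero]
    intro t ht
    rw [Set.uIcc_of_le hyM] at ht
    simp only [posPart_of_nonpos (sub_nonpos.2 ht.1), mul_zero]
  rw [← intervalIntegral.integral_add_adjacent_intervals
      (intervalIntegrable_rpow_mul_posPart hp y 0 y) (intervalIntegrable_rpow_mul_posPart hp y y M),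
    h_below, h_above, add_zero, integral_rpow_mul_sub hp hy]

lemma integral_rpow_mul_sum_posPart {p : ℝ} (hp : 1 < p) {M : ℝ} (ha : ∀ i, 0 ≤ a i)
    (haM : ∀ i, a i ≤ M) :
    ∫ t in 0..M, t ^ (p - 2) * ∑ i, (a i - t)⁺ = (∑ i, a i ^ p) / (p * (p - 1)) := by
  simp_rw [Finset.mul_sum, Finset.sum_div]
  rw [intervalIntegral.integral_finsetSum fun i _ => intervalIntegrable_rpow_mul_posPart hp _ _ _]
  exact Finset.sum_congr rfl fun i _ => integral_rpow_mul_posPart hp (ha i) (haM i)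

lemma IsWeaklyMajorizedBy.sum_rpow_le (h : IsWeaklyMajorizedBy a b) (ha : ∀ i, 0 ≤ a i)
    (hb : ∀ i, 0 ≤ b i) {p : ℝ} (hp : 1 ≤ p) : ∑ i, a i ^ p ≤ ∑ i, b i ^ p := by
  rcases hp.eq_or_lt with rfl | hp
  · simpa [posPart_of_nonneg, ha, hb] using h 0
  obtain ⟨M, hM, habM⟩ := (Finite.bddAbove_range (a ⊔ b)).exists_ge 0
  simp only [Set.forall_mem_range, Pi.sup_apply, sup_le_iff] at habM
  have h_int (c : ι → ℝ) :
      IntervalIntegrable (fun t : ℝ => t ^ (p - 2) * ∑ i, (c i - t)⁺) volume 0 M := by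
    simp_rw [Finset.mul_sum]
    simpa only [Finset.sum_fn] using IntervalIntegrable.sum Finset.univ fun i _ =>
      intervalIntegrable_rpow_mul_posPart hp (c i) 0 M
  have hpp : 0 < p * (p - 1) := mul_pos (by linarith) (by linarith)
  rw [← div_le_div_iff_of_pos_right hpp,
    ← integral_rpow_mul_sum_posPart hp ha fun i => (habM i).1,
    ← integral_rpow_mul_sum_posPart hp hb fun i => (habM i).2]
  exact intervalIntegral.integral_mono_on hM (h_int a) (h_int b) fun t ht =>
    mul_le_mul_of_nonneg_left (h t) (Real.rpow_nonneg ht.1 _)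

end WeakMajorization

/-! ### Monotonicity of eigenvalues -/

section InnerProductSpace

variable {E : Type*} [NormedAddCommGroup E] [InnerProductSpace 𝕜 E]
variable {ι : Type*} [Fintype ι]

lemma exists_ne_zero_forall_inner_eq_zero [FiniteDimensional 𝕜 E] (w : ι → E)
    (hw : Fintype.card ι < Module.finrank 𝕜 E) : ∃ x : E, x ≠ 0 ∧ ∀ k, inner 𝕜 (w k) x = 0 := by
  let F : E →ₗ[𝕜] ι → 𝕜 := LinearMap.pi fun k => (innerSL 𝕜 (w k)).toLinearMap
  obtain ⟨x, hx, hx0⟩ := (Submodule.ne_bot_iff _).1 <|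
    F.ker_ne_bot_of_finrank_lt (by rwa [Module.finrank_pi])
  exact ⟨x, hx0, fun k => congrFun (LinearMap.mem_ker.1 hx) k⟩

section Eigenbasis

variable {T : E →ₗ[𝕜] E} (u : OrthonormalBasis ι 𝕜 E) {d : ι → ℝ}

lemma re_inner_map_self_eq_sum (hT : ∀ k, T (u k) = (d k : 𝕜) • u k) (x : E) :
    RCLike.re (inner 𝕜 (T x) x) = ∑ k, d k * ‖inner 𝕜 (u k) x‖ ^ 2 := by
  conv_lhs => rw [← u.sum_repr' x, map_sum, u.sum_repr' x]
  simp only [map_smul, hT, sum_inner, inner_smul_left, map_sum, RCLike.conj_ofReal]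
  refine Finset.sum_congr rfl fun k _ => ?_
  rw [mul_left_comm, RCLike.conj_mul, ← RCLike.ofReal_pow, ← RCLike.ofReal_mul, RCLike.ofReal_re]

lemma mul_norm_sq_le_re_inner_map_self (hT : ∀ k, T (u k) = (d k : 𝕜) • u k) {c : ℝ} {x : E}
    (hc : ∀ k, inner 𝕜 (u k) x ≠ 0 → c ≤ d k) : c * ‖x‖ ^ 2 ≤ RCLike.re (inner 𝕜 (T x) x) := by
  rw [re_inner_map_self_eq_sum u hT, ← u.sum_sq_norm_inner_right x, Finset.mul_sum]
  refine Finset.sum_le_sum fun k _ => ?_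
  rcases eq_or_ne (inner 𝕜 (u k) x) 0 with hk | hk
  · simp [hk]
  · exact mul_le_mul_of_nonneg_right (hc k hk) (sq_nonneg _)

lemma re_inner_map_self_le_mul_norm_sq (hT : ∀ k, T (u k) = (d k : 𝕜) • u k) {c : ℝ} {x : E}
    (hc : ∀ k, inner 𝕜 (u k) x ≠ 0 → d k ≤ c) : RCLike.re (inner 𝕜 (T x) x) ≤ c * ‖x‖ ^ 2 := by
  simpa using mul_norm_sq_le_re_inner_map_self (T := -T) (d := -d) (c := -c) u (by simp [hT])
    fun k hk => neg_le_neg (hc k hk)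

end Eigenbasis

variable [LinearOrder ι] {T S : E →ₗ[𝕜] E} {a b : ι → ℝ}

-- A nonzero `x` orthogonal to `u j` for `j > i` and to `v j` for `j < i` exists by counting
-- dimensions, and `a i ‖x‖² ≤ ⟪T x, x⟫ ≤ ⟪S x, x⟫ ≤ b i ‖x‖²`.
lemma antitone_eigenvalues_le_of_le (u v : OrthonormalBasis ι 𝕜 E) (ha : Antitone a)
    (hb : Antitone b) (hT : ∀ k, T (u k) = (a k : 𝕜) • u k) (hS : ∀ k, S (v k) = (b k : 𝕜) • v k)
    (hTS : T ≤ S) : a ≤ b := by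
  intro i
  have := u.toBasis.finiteDimensional_of_finite
  obtain ⟨x, hx0, hx⟩ := exists_ne_zero_forall_inner_eq_zero (𝕜 := 𝕜)
    (fun j : {j // j ≠ i} => if i < j.1 then u j else v j) <| by
      rw [Module.finrank_eq_card_basis u.toBasis]
      exact Fintype.card_subtype_lt (x := i) (by simp)
  have hlower : a i * ‖x‖ ^ 2 ≤ RCLike.re (inner 𝕜 (T x) x) :=
    mul_norm_sq_le_re_inner_map_self u hT fun j hj => ha <| by
      by_contra! hij
      exact hj (by simpa [hij] using hx ⟨j, hij.ne'⟩)
  have hupper : RCLike.re (inner 𝕜 (S x) x) ≤ b i * ‖x‖ ^ 2 :=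
    re_inner_map_self_le_mul_norm_sq v hS fun j hj => hb <| by
      by_contra! hji
      exact hj (by simpa [hji.not_gt] using hx ⟨j, hji.ne⟩)
  have hmid : RCLike.re (inner 𝕜 (T x) x) ≤ RCLike.re (inner 𝕜 (S x) x) := by
    simpa [inner_sub_left] using hTS.2 x
  exact le_of_mul_le_mul_right (hlower.trans (hmid.trans hupper)) (by positivity)

end InnerProductSpace

section Matrix

open scoped MatrixOrder ComplexOrder

variable {m : Type*} [Fintype m] [DecidableEq m] {A B : Matrix m m 𝕜}

/-! ### Functions of a Hermitian matrix -/

lemma of_norm_sq_mem_doublyStochastic (U : Matrix.unitaryGroup m 𝕜) :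
    Matrix.of (fun i j => ‖U i j‖ ^ 2) ∈ doublyStochastic ℝ m := by
  have hrow (i : m) : ∑ j, ‖U i j‖ ^ 2 = 1 := by
    have h := congrFun₂ (Unitary.coe_mul_star_self U) i i
    simp only [Matrix.mul_apply, Unitary.coe_star, Matrix.star_apply, RCLike.star_def,
      RCLike.mul_conj, Matrix.one_apply_eq] at h
    exact_mod_cast h
  have hcol (j : m) : ∑ i, ‖U i j‖ ^ 2 = 1 := by
    have h := congrFun₂ (Unitary.coe_star_mul_self U) j j
    simp only [Matrix.mul_apply, Matrix.star_apply, RCLike.star_def, RCLike.conj_mul,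
      Matrix.one_apply_eq] at h
    exact_mod_cast h
  exact mem_doublyStochastic_iff_sum.2 ⟨fun _ _ => sq_nonneg _, hrow, hcol⟩

/-- The doubly stochastic matrix of squared moduli of the entries of a unitary matrix that
diagonalizes a Hermitian matrix. -/
def spectralWeights (hA : A.IsHermitian) : Matrix m m ℝ :=
  Matrix.of fun i j => ‖hA.eigenvectorUnitary i j‖ ^ 2

lemma spectralWeights_mem_doublyStochastic (hA : A.IsHermitian) :
    spectralWeights hA ∈ doublyStochastic ℝ m :=
  of_norm_sq_mem_doublyStochastic hA.eigenvectorUnitary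

lemma cfc_apply_diag (hA : A.IsHermitian) (f : ℝ → ℝ) (j : m) :
    cfc f A j j = ((spectralWeights hA).mulVec (f ∘ hA.eigenvalues) j : 𝕜) := by
  rw [hA.cfc_eq, Matrix.IsHermitian.cfc, Unitary.conjStarAlgAut_apply, Matrix.mul_apply]
  simp only [Matrix.mul_diagonal, Matrix.mulVec, dotProduct, spectralWeights]
  push_cast
  refine Finset.sum_congr rfl fun k _ => ?_
  rw [Matrix.star_apply, RCLike.star_def, mul_right_comm, RCLike.mul_conj]
  simp

lemma trace_cfc (hA : A.IsHermitian) (f : ℝ → ℝ) :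
    (cfc f A).trace = ((∑ i, f (hA.eigenvalues i) : ℝ) : 𝕜) := by
  simp only [Matrix.trace, Matrix.diag, cfc_apply_diag hA, ← RCLike.ofReal_sum]
  rw [sum_mulVec_of_mem_doublyStochastic (spectralWeights_mem_doublyStochastic hA)]
  rfl

lemma sum_comp_eigenvalues_neg (hA : A.IsHermitian) (f : ℝ → ℝ) :
    ∑ i, f (hA.neg.eigenvalues i) = ∑ i, f (-hA.eigenvalues i) := by
  have h := (trace_cfc hA.neg f).symm.trans
    (congrArg Matrix.trace
      (cfc_comp_neg f A ((Matrix.finite_real_spectrum.image _).continuousOn f) hA)).symm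
  rw [trace_cfc hA fun x => f (-x)] at h
  exact_mod_cast h

lemma sum_comp_eigenvalues₀ {M : Type*} [AddCommMonoid M] (hA : A.IsHermitian) (f : ℝ → M) :
    ∑ i, f (hA.eigenvalues₀ i) = ∑ i, f (hA.eigenvalues i) :=
  (Equiv.sum_comp (Fintype.equivOfCardEq (Fintype.card_fin _)).symm
    fun i => f (hA.eigenvalues₀ i)).symm

lemma sum_eigenvalues₀_eq_re_trace (hA : A.IsHermitian) :
    ∑ i, hA.eigenvalues₀ i = RCLike.re A.trace := by
  rw [sum_comp_eigenvalues₀ hA fun x => x, hA.trace_eq_sum_eigenvalues, map_sum]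
  simp only [RCLike.ofReal_re]

/-! ### Spectral variation -/

lemma eigenvalues₀_le_add_of_le (hA : A.IsHermitian) (hB : B.IsHermitian) {t : ℝ}
    (hAB : A ≤ B + algebraMap ℝ _ t) (i : Fin (Fintype.card m)) :
    hA.eigenvalues₀ i ≤ hB.eigenvalues₀ i + t := by
  have hA' := Matrix.isSymmetric_toEuclideanLin_iff.2 hA
  have hB' := Matrix.isSymmetric_toEuclideanLin_iff.2 hB
  refine antitone_eigenvalues_le_of_le
    (T := A.toEuclideanLin) (S := (B + algebraMap ℝ _ t).toEuclideanLin)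
    (hA'.eigenvectorBasis finrank_euclideanSpace) (hB'.eigenvectorBasis finrank_euclideanSpace)
    hA.eigenvalues₀_antitone (fun i j hij => add_le_add_left (hB.eigenvalues₀_antitone hij) t)
    (hA'.apply_eigenvectorBasis _) (fun k => ?_) ?_ i
  · rw [map_add, LinearMap.add_apply, hB'.apply_eigenvectorBasis, RCLike.ofReal_add, add_smul]
    congr 1
    rw [Algebra.algebraMap_eq_smul_one, RCLike.real_smul_eq_coe_smul (K := 𝕜), map_smul,
      Matrix.toLpLin_one]
    rfl
  · have h := Matrix.isPositive_toEuclideanLin_iff.2 (Matrix.le_iff.1 hAB)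
    rwa [map_sub] at h

lemma isWeaklyMajorizedBy_eigenvalues₀_sub (hA : A.IsHermitian) (hB : B.IsHermitian) :
    IsWeaklyMajorizedBy (hA.eigenvalues₀ - hB.eigenvalues₀) (hA.sub hB).eigenvalues₀ := by
  intro t
  have hC := hA.sub hB
  let P := cfc (fun x : ℝ => (x - t)⁺) (A - B)
  have hP : P.IsHermitian := cfc_predicate _ _
  have hP_nonneg : 0 ≤ P := cfc_nonneg fun x _ => posPart_nonneg _
  have hP_trace : RCLike.re P.trace = ∑ i, (hC.eigenvalues₀ i - t)⁺ := by
    rw [trace_cfc hC, RCLike.ofReal_re, sum_comp_eigenvalues₀ hC fun x => (x - t)⁺]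
  have hsub_le : A - B ≤ P + algebraMap ℝ _ t := by
    calc A - B = cfc id (A - B) := (cfc_id ℝ (A - B) hC).symm
      _ ≤ cfc (fun x : ℝ => (x - t)⁺ + t) (A - B) :=
        cfc_mono (fun x _ => sub_le_iff_le_add.1 (le_posPart (x - t)))
          (Matrix.finite_real_spectrum.continuousOn _) (Matrix.finite_real_spectrum.continuousOn _)
      _ = P + algebraMap ℝ _ t :=
        cfc_add_const t _ (A - B) (Matrix.finite_real_spectrum.continuousOn _) hC
  have hupper (i) : hA.eigenvalues₀ i ≤ (hB.add hP).eigenvalues₀ i + t :=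
    eigenvalues₀_le_add_of_le hA _ (by rwa [add_assoc, ← sub_le_iff_le_add']) i
  have hlower (i) : hB.eigenvalues₀ i ≤ (hB.add hP).eigenvalues₀ i := by
    simpa using eigenvalues₀_le_add_of_le (t := 0) hB (hB.add hP) (by simpa using hP_nonneg) i
  calc ∑ i, ((hA.eigenvalues₀ - hB.eigenvalues₀) i - t)⁺
      ≤ ∑ i, ((hB.add hP).eigenvalues₀ i - hB.eigenvalues₀ i) :=
        Finset.sum_le_sum fun i _ => by
          rw [Pi.sub_apply, posPart_def]
          exact sup_le (by linarith [hupper i]) (sub_nonneg.2 (hlower i))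
    _ = RCLike.re P.trace := by
        rw [Finset.sum_sub_distrib, sum_eigenvalues₀_eq_re_trace, sum_eigenvalues₀_eq_re_trace,
          Matrix.trace_add, map_add, add_sub_cancel_left]
    _ = ∑ i, (hC.eigenvalues₀ i - t)⁺ := hP_trace

lemma isWeaklyMajorizedBy_neg_eigenvalues₀_sub (hA : A.IsHermitian) (hB : B.IsHermitian) :
    IsWeaklyMajorizedBy (-(hA.eigenvalues₀ - hB.eigenvalues₀)) (-(hA.sub hB).eigenvalues₀) := by
  intro t
  calc ∑ i, ((-(hA.eigenvalues₀ - hB.eigenvalues₀)) i - t)⁺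
      = ∑ i, ((hB.eigenvalues₀ - hA.eigenvalues₀) i - t)⁺ := by rw [neg_sub]
    _ ≤ ∑ i, ((hB.sub hA).eigenvalues₀ i - t)⁺ := isWeaklyMajorizedBy_eigenvalues₀_sub hB hA t
    _ = ∑ i, ((hB.sub hA).eigenvalues i - t)⁺ := sum_comp_eigenvalues₀ _ fun x => (x - t)⁺
    _ = ∑ i, ((hA.sub hB).neg.eigenvalues i - t)⁺ := by simp only [neg_sub]
    _ = ∑ i, (-(hA.sub hB).eigenvalues i - t)⁺ :=
      sum_comp_eigenvalues_neg _ fun x => (x - t)⁺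
    _ = ∑ i, ((-(hA.sub hB).eigenvalues₀) i - t)⁺ :=
      (sum_comp_eigenvalues₀ _ fun x => (-x - t)⁺).symm

theorem sum_abs_eigenvalues₀_sub_rpow_le (hA : A.IsHermitian) (hB : B.IsHermitian) {p : ℝ}
    (hp : 1 ≤ p) : ∑ i, |hA.eigenvalues₀ i - hB.eigenvalues₀ i| ^ p ≤
      ∑ i, |(hA.sub hB).eigenvalues i| ^ p := by
  rw [← sum_comp_eigenvalues₀ (hA.sub hB) fun x => |x| ^ p]
  exact ((isWeaklyMajorizedBy_eigenvalues₀_sub hA hB).abs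
    (isWeaklyMajorizedBy_neg_eigenvalues₀_sub hA hB)).sum_rpow_le
    (fun _ => abs_nonneg _) (fun _ => abs_nonneg _) hp

/-! ### Schatten and entrywise norms -/

lemma sum_concaveOn_le_sum_mulVec {M : Matrix m m ℝ} (hM : M ∈ doublyStochastic ℝ m) {s : Set ℝ}
    {f : ℝ → ℝ} (hf : ConcaveOn ℝ s f) {x : m → ℝ} (hx : ∀ i, x i ∈ s) :
    ∑ i, f (x i) ≤ ∑ i, f (M.mulVec x i) := by
  refine (sum_mulVec_of_mem_doublyStochastic (x := f ∘ x) hM).symm.le.trans ?_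
  exact Finset.sum_le_sum fun i _ => hf.le_map_sum (fun j _ => hM.1 i j)
    (sum_row_of_mem_doublyStochastic hM i) fun j _ => hx j

lemma sum_sq_norm_col_eq (hA : A.IsHermitian) (j : m) :
    ∑ i, ‖A i j‖ ^ 2 = (spectralWeights hA).mulVec (fun k => hA.eigenvalues k ^ 2) j := by
  have h : (A ^ 2) j j = ((∑ i, ‖A i j‖ ^ 2 : ℝ) : 𝕜) := by
    rw [sq, Matrix.mul_apply]
    push_cast
    refine Finset.sum_congr rfl fun i _ => ?_
    rw [← hA.apply j i, RCLike.star_def, RCLike.conj_mul]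
  rw [← cfc_pow_id (R := ℝ) A 2 hA.isSelfAdjoint, cfc_apply_diag hA] at h
  exact_mod_cast h.symm

lemma rpow_sum_le_sum_rpow {ι : Type*} (s : Finset ι) {r : ℝ} (hr : 0 < r) (hr1 : r ≤ 1)
    {f : ι → ℝ} (hf : ∀ i ∈ s, 0 ≤ f i) : (∑ i ∈ s, f i) ^ r ≤ ∑ i ∈ s, f i ^ r :=
  Finset.le_sum_of_subadditive_on_pred (fun x : ℝ => x ^ r) (fun x => 0 ≤ x)
    (Real.zero_rpow hr.ne').le (fun _ _ hx hy => Real.rpow_add_le_add_rpow hx hy hr.le hr1)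
    (fun _ _ => add_nonneg) f hf

lemma sq_rpow_half {x : ℝ} (hx : 0 ≤ x) (p : ℝ) : (x ^ 2) ^ (p / 2) = x ^ p := by
  rw [← Real.rpow_natCast_mul hx, Nat.cast_ofNat, mul_div_cancel₀ p two_ne_zero]

theorem sum_abs_eigenvalues_rpow_le (hA : A.IsHermitian) {p : ℝ} (hp : 0 < p) (hp2 : p ≤ 2) :
    ∑ k, |hA.eigenvalues k| ^ p ≤ ∑ i, ∑ j, ‖A i j‖ ^ p := by
  calc ∑ k, |hA.eigenvalues k| ^ p = ∑ k, (hA.eigenvalues k ^ 2) ^ (p / 2) := by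
        simp only [← sq_abs (hA.eigenvalues _), sq_rpow_half (abs_nonneg _)]
    _ ≤ ∑ j, (∑ i, ‖A i j‖ ^ 2) ^ (p / 2) := by
        simp only [sum_sq_norm_col_eq hA]
        exact sum_concaveOn_le_sum_mulVec (spectralWeights_mem_doublyStochastic hA)
          (Real.concaveOn_rpow (by linarith) (by linarith)) fun k => Set.mem_Ici.2 (sq_nonneg _)
    _ ≤ ∑ j, ∑ i, ‖A i j‖ ^ p := Finset.sum_le_sum fun j _ => by
        simpa only [sq_rpow_half (norm_nonneg _)] using rpow_sum_le_sum_rpow Finset.univ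
          (half_pos hp) (by linarith) fun i _ => sq_nonneg ‖A i j‖
    _ = ∑ i, ∑ j, ‖A i j‖ ^ p := Finset.sum_comm

end Matrix

/-! ### Stieltjes transforms -/

section Stieltjes

variable {z : ℂ}

lemma abs_im_le_norm_sub_ofReal (z : ℂ) (x : ℝ) : |z.im| ≤ ‖z - x‖ := by
  simpa using Complex.abs_im_le_norm (z - x)

lemma sub_ofReal_ne_zero (hz : z.im ≠ 0) (x : ℝ) : z - x ≠ 0 :=
  norm_pos_iff.1 ((abs_pos.2 hz).trans_le (abs_im_le_norm_sub_ofReal z x))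

lemma norm_inv_sub_ofReal_le (hz : z.im ≠ 0) (x : ℝ) : ‖(z - x)⁻¹‖ ≤ |z.im|⁻¹ := by
  rw [norm_inv]
  exact inv_anti₀ (abs_pos.2 hz) (abs_im_le_norm_sub_ofReal z x)

lemma norm_inv_sub_ofReal_sub_inv_le (hz : z.im ≠ 0) (x y : ℝ) :
    ‖(z - x)⁻¹ - (z - y)⁻¹‖ ≤ (z.im ^ 2)⁻¹ * |x - y| := by
  rw [inv_sub_inv' (sub_ofReal_ne_zero hz x) (sub_ofReal_ne_zero hz y), sub_sub_sub_cancel_left,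
    ← Complex.ofReal_sub, norm_mul, norm_mul, Complex.norm_real, Real.norm_eq_abs, mul_right_comm,
    ← sq_abs z.im, ← inv_pow, sq]
  gcongr <;> exact norm_inv_sub_ofReal_le hz _

variable {Ω : Type*} [MeasurableSpace Ω] {μ : Measure Ω}

lemma stieltjesT_map {X : Ω → ℝ} (hX : AEMeasurable X μ) (z : ℂ) :
    stieltjesT (μ.map X) z = ∫ ω, (z - X ω)⁻¹ ∂μ :=
  integral_map hX (by fun_prop)

lemma integrable_inv_sub_ofReal [IsFiniteMeasure μ] {X : Ω → ℝ} (hX : AEMeasurable X μ)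
    (hz : z.im ≠ 0) : Integrable (fun ω => (z - X ω)⁻¹) μ :=
  .of_bound (by fun_prop) |z.im|⁻¹ (.of_forall fun ω => norm_inv_sub_ofReal_le hz (X ω))

variable [IsZeroOrProbabilityMeasure μ]

lemma integral_norm_le_rpow_integral_norm_rpow {E : Type*} [NormedAddCommGroup E] {f : Ω → E}
    {p : ℝ} (hp : 1 ≤ p) (hf : MemLp f (ENNReal.ofReal p) μ) :
    ∫ ω, ‖f ω‖ ∂μ ≤ (∫ ω, ‖f ω‖ ^ p ∂μ) ^ (1 / p) := by
  have hp0 : 0 < p := by linarith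
  rcases eq_zero_or_isProbabilityMeasure μ with rfl | _
  · simp [hp0.ne']
  have hfp : Integrable (fun ω => ‖f ω‖ ^ p) μ := by
    simpa [hp0.le] using hf.integrable_norm_rpow (by simpa using hp0) ENNReal.ofReal_ne_top
  have h_jensen : (∫ ω, ‖f ω‖ ∂μ) ^ p ≤ ∫ ω, ‖f ω‖ ^ p ∂μ :=
    (convexOn_rpow hp).map_integral_le (Real.continuous_rpow_const hp0.le).continuousOn isClosed_Ici
      (.of_forall fun ω => norm_nonneg (f ω))
      (hf.integrable (by simpa using hp)).norm hfp
  rw [one_div]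
  exact (Real.le_rpow_inv_iff_of_pos (integral_nonneg fun _ => norm_nonneg _)
    (integral_nonneg fun _ => by positivity) hp0).2 h_jensen

theorem norm_stieltjesT_map_sub_le {X Y : Ω → ℝ} (hX : AEMeasurable X μ) (hY : AEMeasurable Y μ)
    {p : ℝ} (hp : 1 ≤ p) (hXY : MemLp (X - Y) (ENNReal.ofReal p) μ) (hz : z.im ≠ 0) :
    ‖stieltjesT (μ.map X) z - stieltjesT (μ.map Y) z‖ ≤
      (z.im ^ 2)⁻¹ * (∫ ω, |X ω - Y ω| ^ p ∂μ) ^ (1 / p) := by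
  rw [stieltjesT_map hX, stieltjesT_map hY, ← integral_sub (integrable_inv_sub_ofReal hX hz)
    (integrable_inv_sub_ofReal hY hz)]
  calc ‖∫ ω, ((z - X ω)⁻¹ - (z - Y ω)⁻¹) ∂μ‖ ≤ ∫ ω, (z.im ^ 2)⁻¹ * |X ω - Y ω| ∂μ :=
        norm_integral_le_of_norm_le ((hXY.integrable (by simpa using hp)).abs.const_mul _)
          (.of_forall fun ω => norm_inv_sub_ofReal_sub_inv_le hz (X ω) (Y ω))
    _ = (z.im ^ 2)⁻¹ * ∫ ω, |X ω - Y ω| ∂μ := integral_const_mul _ _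
    _ ≤ (z.im ^ 2)⁻¹ * (∫ ω, |X ω - Y ω| ^ p ∂μ) ^ (1 / p) :=
        mul_le_mul_of_nonneg_left (integral_norm_le_rpow_integral_norm_rpow hp hXY) (by positivity)

end Stieltjes

/-! ### Empirical measures -/

section Empirical

open ProbabilityTheory

variable {ι : Type*} [Fintype ι] [MeasurableSpace ι]

lemma uniformOn_univ_eq_smul_count :
    uniformOn (Set.univ : Set ι) = (Fintype.card ι : ENNReal)⁻¹ • Measure.count := by
  rw [uniformOn, ProbabilityTheory.cond, Measure.restrict_univ, Measure.count_univ,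
    ENat.card_eq_coe_fintype_card, ENat.toENNReal_coe]

lemma integral_uniformOn_univ [MeasurableSingletonClass ι] (f : ι → ℝ) :
    ∫ i, f i ∂uniformOn Set.univ = (Fintype.card ι : ℝ)⁻¹ * ∑ i, f i := by
  rw [uniformOn_univ_eq_smul_count, integral_smul_measure, integral_count, ENNReal.toReal_inv,
    ENNReal.toReal_natCast, smul_eq_mul]

lemma map_uniformOn_univ {X : Type*} [MeasurableSpace X] {x : ι → X} (hx : Measurable x) :
    (uniformOn Set.univ).map x = (Fintype.card ι : ENNReal)⁻¹ • ∑ i, Measure.dirac (x i) := by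
  rw [uniformOn_univ_eq_smul_count, Measure.map_smul, Measure.count, Measure.sum_fintype,
    Measure.map_finset_sum hx.aemeasurable]
  simp only [Measure.map_dirac' hx]

end Empirical

/-! ### Spectral variation of self-adjoint matrices -/

section HermMat

open ProbabilityTheory

variable {n : ℕ}

lemma sortedDesc_eq_comp_of_antitone {f : Fin n → ℝ} {σ : Equiv.Perm (Fin n)}
    (h : Antitone (f ∘ σ)) : sortedDesc f = f ∘ σ := by
  have h_mono : Monotone (f ∘ Fin.revPerm.trans σ) := h.comp Fin.rev_anti
  funext i
  have h_rev := congrFun (Tuple.comp_sort_eq_comp_iff_monotone.2 h_mono) i.rev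
  simpa [sortedDesc] using h_rev.symm

lemma map_sortedDesc_uniformOn_univ (f : Fin n → ℝ) :
    (uniformOn Set.univ).map (sortedDesc f) = (uniformOn Set.univ).map f := by
  rw [map_uniformOn_univ .of_discrete, map_uniformOn_univ .of_discrete]
  congr 1
  exact Equiv.sum_comp (Fin.revPerm.trans (Tuple.sort f)) fun i => Measure.dirac (f i)

lemma specMeasure_eq_map_sortedDesc (A : HermMat 𝕜 n) :
    specMeasure A = (uniformOn Set.univ).map (sortedDesc (eigs A)) := by
  rw [map_sortedDesc_uniformOn_univ, map_uniformOn_univ .of_discrete, Fintype.card_fin,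
    specMeasure]

lemma sortedDesc_eigs (A : HermMat 𝕜 n) (i : Fin n) :
    sortedDesc (eigs A) i =
      (herm_isHermitian A).eigenvalues₀ (finCongr (Fintype.card_fin n).symm i) := by
  let e := (finCongr (Fintype.card_fin n).symm).trans
    (Fintype.equivOfCardEq (Fintype.card_fin _))
  have h_comp : eigs A ∘ e =
      (herm_isHermitian A).eigenvalues₀ ∘ finCongr (Fintype.card_fin n).symm := by
    funext j
    simp [e, eigs, Matrix.IsHermitian.eigenvalues]
  have h_anti : Antitone (eigs A ∘ e) :=
    h_comp ▸ (herm_isHermitian A).eigenvalues₀_antitone.comp_monotone fun _ _ h => h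
  rw [sortedDesc_eq_comp_of_antitone h_anti, h_comp, Function.comp_apply]

theorem sum_abs_sortedDesc_eigs_sub_rpow_le (A B : HermMat 𝕜 n) {p : ℝ} (hp : 1 ≤ p) :
    ∑ i, |sortedDesc (eigs A) i - sortedDesc (eigs B) i| ^ p ≤ ∑ i, |eigs (A - B) i| ^ p := by
  simp only [sortedDesc_eigs]
  rw [Equiv.sum_comp (finCongr (Fintype.card_fin n).symm) fun i =>
    |(herm_isHermitian A).eigenvalues₀ i - (herm_isHermitian B).eigenvalues₀ i| ^ p]
  exact sum_abs_eigenvalues₀_sub_rpow_le _ _ hp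

lemma matLpNormPow_nonneg (p : ℝ) (A : HermMat 𝕜 n) : 0 ≤ matLpNormPow p A :=
  Finset.sum_nonneg fun _ _ => Finset.sum_nonneg fun _ _ => Real.rpow_nonneg (norm_nonneg _) p

theorem sum_abs_eigs_rpow_le_matLpNormPow (A : HermMat 𝕜 n) {p : ℝ} (hp : 0 < p) (hp2 : p ≤ 2) :
    ∑ i, |eigs A i| ^ p ≤ matLpNormPow p A :=
  sum_abs_eigenvalues_rpow_le (herm_isHermitian A) hp hp2

lemma rpow_integral_sortedDesc_eigs_sub_le (A B : HermMat 𝕜 n) {p : ℝ} (hp1 : 1 ≤ p)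
    (hp2 : p ≤ 2) :
    (∫ i, |sortedDesc (eigs A) i - sortedDesc (eigs B) i| ^ p ∂uniformOn Set.univ) ^ (1 / p) ≤
      ((n : ℝ) ^ (1 / p))⁻¹ * matLpNormPow p (A - B) ^ (1 / p) := by
  have h_sum : ∑ i, |sortedDesc (eigs A) i - sortedDesc (eigs B) i| ^ p ≤ matLpNormPow p (A - B) :=
    (sum_abs_sortedDesc_eigs_sub_rpow_le A B hp1).trans
      (sum_abs_eigs_rpow_le_matLpNormPow (A - B) (by linarith) hp2)
  rw [integral_uniformOn_univ, Fintype.card_fin, Real.mul_rpow (by positivity) (by positivity),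
    Real.inv_rpow n.cast_nonneg]
  gcongr

theorem spectral_variation_p_ge_one_general (p : ℝ) (hp1 : 1 ≤ p) (hp2 : p ≤ 2) (n : ℕ)
    (A B : HermMat 𝕜 n) :
    (∑ i, |sortedDesc (eigs A) i - sortedDesc (eigs B) i| ^ p ≤ ∑ i, |eigs (A - B) i| ^ p) ∧
    (∑ i, |eigs (A - B) i| ^ p ≤ matLpNormPow p (A - B)) ∧
    (∃ π : Measure (ℝ × ℝ),
      π.map Prod.fst = specMeasure A ∧ π.map Prod.snd = specMeasure B ∧
      (∫ q, |q.1 - q.2| ^ p ∂π) ^ (1 / p) ≤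
        ((n : ℝ) ^ (1 / p))⁻¹ * matLpNormPow p (A - B) ^ (1 / p)) ∧
    (∀ z : ℂ, z.im ≠ 0 →
      ‖stieltjesT (specMeasure A) z - stieltjesT (specMeasure B) z‖ ≤
        (z.im ^ 2)⁻¹ * (((n : ℝ) ^ (1 / p))⁻¹ * matLpNormPow p (A - B) ^ (1 / p))) := by
  have h_mean := rpow_integral_sortedDesc_eigs_sub_le A B hp1 hp2
  refine ⟨sum_abs_sortedDesc_eigs_sub_rpow_le A B hp1,
    sum_abs_eigs_rpow_le_matLpNormPow (A - B) (by linarith) hp2,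
    ⟨(uniformOn Set.univ).map fun i => (sortedDesc (eigs A) i, sortedDesc (eigs B) i), ?_, ?_, ?_⟩,
    fun z hz => ?_⟩
  · exact (Measure.fst_map_prodMk .of_discrete).trans (specMeasure_eq_map_sortedDesc A).symm
  · exact (Measure.snd_map_prodMk .of_discrete).trans (specMeasure_eq_map_sortedDesc B).symm
  · rwa [integral_map .of_discrete (by fun_prop (disch := positivity))]
  · rw [specMeasure_eq_map_sortedDesc, specMeasure_eq_map_sortedDesc]
    exact (norm_stieltjesT_map_sub_le .of_discrete .of_discrete hp1 .of_discrete hz).trans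
      (mul_le_mul_of_nonneg_left h_mean (by positivity))

end HermMat

/-- Lemma (spectral variation inequalities for `p ∈ [1,2]`). -/
theorem spectral_variation_p_ge_one
    (p : ℝ) (hp1 : 1 ≤ p) (hp2 : p ≤ 2) (n : ℕ) (A B : HermMat 𝕜 n) :
    -- Lidskii-type bound
    (∑ i, |sortedDesc (eigs A) i - sortedDesc (eigs B) i| ^ p ≤
      ∑ i, |eigs (A - B) i| ^ p) ∧
    (∑ i, |eigs (A - B) i| ^ p ≤ matLpNormPow p (A - B)) ∧
    -- Wasserstein bound: `W_p(μ_A, μ_B) ≤ n^{-1/p} ‖A-B‖_{ℓ^p}`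
    (∃ π : Measure (ℝ × ℝ),
      π.map Prod.fst = specMeasure A ∧ π.map Prod.snd = specMeasure B ∧
      (∫ q, |q.1 - q.2| ^ p ∂π) ^ (1/p) ≤
        ((n : ℝ) ^ (1/p))⁻¹ * (matLpNormPow p (A - B)) ^ (1/p)) ∧
    -- Stieltjes-transform distance bound
    (∀ z : ℂ, 2 ≤ z.im →
      ‖stieltjesT (specMeasure A) z - stieltjesT (specMeasure B) z‖ ≤
        ((n : ℝ) ^ (1/p))⁻¹ * (matLpNormPow p (A - B)) ^ (1/p)) := by
  obtain ⟨h_lidskii, h_schatten, h_wasserstein, h_stieltjes⟩ :=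
    spectral_variation_p_ge_one_general p hp1 hp2 n A B
  refine ⟨h_lidskii, h_schatten, h_wasserstein, fun z hz => ?_⟩
  have h_factor : (z.im ^ 2)⁻¹ ≤ 1 := inv_le_one_of_one_le₀ (by nlinarith)
  exact (h_stieltjes z (by linarith)).trans <| mul_le_of_le_one_left
    (mul_nonneg (by positivity) (Real.rpow_nonneg (matLpNormPow_nonneg p _) _)) h_factor

end
end
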